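/- Let 𝔑 be an admissible weight matrix and let 𝔐 be a weight matrix such that for all M ∈ 𝔐 there is N ∈ 𝔑 with ∑_{ℓ≥k} 1/ν_ℓ ≲ k/μ_k and μ ≲ ν. Let E be a compact subset of ℝ^n. Then for every M ∈ 𝔐 and every Whitney jet F of class B^{M} on E there exist Ṅ ∈ 𝔑 and f ∈ C^∞(ℝ^n) with ∂^α f|_E = F^α for all α ∈ ℕ^n and constants C, ρ > 0 such that |∂^α f(x)| ≤ C ρ^{|α|} Ṅ_{|α|} for all α ∈ ℕ^n and x ∈ ℝ^n; that is, the jet mapping j_E^∞ : ⋃_{Ṅ∈𝔑} B^{Ṅ}(ℝ^n) → ⋃_{M∈𝔐} B^{M}(E) is surjective. -/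

import Mathlib

/-!
The extension is built by Whitney's method in the form of a telescoping series over dyadic scales,
with Taylor polynomials whose degree depends on the scale. For a weight `ν` put
`τ_k = k/ν_k + ∑_{j ≥ k} 1/ν_j`, `s_k = 1/(τ_1 ⋯ τ_k)` and `h(t) = inf_k s_k t^k`; the infimum is
attained at `Γ(t) = #{k ≥ 1 : τ_k > t}`. Three facts about these objects carry the proof.

* The relation between `μ` and `ν` says exactly that `μ_k ≲ k/τ_k`, so `M_k ≤ D^k k! s_k`
  (`prodSeq_le_factorial_sS`). Hence the Taylor polynomials of degree `< Γ(t)` at points of `E` at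
  distance `≲ t` of each other differ, on the scale `t`, by a multiple of `h(t)`
  (`abs_TT_sub_le`, `norm_iteratedFDeriv_taylor_sub_le`).
* There are smooth steps on `[0, r]` with `j`-th derivative at most `A^j N_j / h(Lr)`
  (`exists_cutoff`), obtained by iterated averaging with windows adapted to `ν`. Tensor products
  give partitions of unity of mesh `r` with derivatives at most
  `(2/h(Lr))^n A^j N_j` (`exists_partition`).
* The condition `ν_{2k} ≲ ν'_k` implies `h_ν(Bt) ≤ h_{ν'}(t)^2`; iterated, it gives a weight
  `ν'` of the matrix with `h_ν(Bt) ≤ h_{ν'}(t)^e` for any prescribed `e` (`exists_hFun_le_pow`).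

At the scale `t_k = τ_1 2^{-k}` let `f_k` be the Taylor polynomials of degree `< Γ_ν(t_k)`, glued by
a partition of unity of class `N'` with mesh comparable to `t_k`. In `f_{k+1} - f_k`, written as a
double sum over the two partitions, the loss `h_{ν'}^{-2n}` of the cutoffs is absorbed by
`h_ν ≤ h_{ν'}^{2n+2}`, and the two remaining powers of `h_{ν'}` yield the weight `N'_j` and a
factor `t_k`. So the series of these differences converges in `B^{N'}`. As `Γ_ν(t_0) = 0`, the
partial sums equal `f_K` near `E`, and their derivatives at a point `a ∈ E` differ from those of the
Taylor polynomial of `F` at `a` by `O(2^{-K})`; since `Γ_ν(t_K) → ∞`, the sum has the prescribed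
jet on `E` (`exists_extension_of_series`).
-/

/-- The tail sum `∑_{j ≥ k} 1/ν_j`. -/
noncomputable def tailSum (ν : ℕ → ℝ) (k : ℕ) : ℝ := ∑' i : ℕ, 1 / ν (i + k)

/-- `τ_k = k/ν_k + ∑_{j ≥ k} 1/ν_j` (for `k ≥ 1`). -/
noncomputable def tauSeq (ν : ℕ → ℝ) (k : ℕ) : ℝ := (k : ℝ) / ν k + tailSum ν k

/-- The descendant `σ` of `ν`: `σ_0 = 1`, `σ_k = τ_1 k / τ_k` for `k ≥ 1`. -/
noncomputable def sigmaSeq (ν : ℕ → ℝ) : ℕ → ℝ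
  | 0 => 1
  | (k + 1) => tauSeq ν 1 * ((k : ℝ) + 1) / tauSeq ν (k + 1)

/-- `N_k = ν_0 ν_1 ⋯ ν_k`. -/
noncomputable def prodSeq (ν : ℕ → ℝ) (k : ℕ) : ℝ := ∏ i ∈ Finset.range (k + 1), ν i

/-- `h_s(t) = inf_k s_k t^k`. -/
noncomputable def hFun (s : ℕ → ℝ) (t : ℝ) : ℝ := ⨅ k : ℕ, s k * t ^ k

/-- `s_k = S_k / k!`, where `S` is the descendant of `ν`. -/
noncomputable def smallS (ν : ℕ → ℝ) (k : ℕ) : ℝ :=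
  prodSeq (sigmaSeq ν) k / (Nat.factorial k : ℝ)

/-- `ν` is the quotient sequence of a weight sequence: increasing, positive, `ν_0 = 1`,
and `N_k^{1/k} → ∞` for `N_k = ν_0 ⋯ ν_k`. -/
def IsWeightSeqQ (ν : ℕ → ℝ) : Prop :=
  ν 0 = 1 ∧ Monotone ν ∧ (∀ k, 0 < ν k) ∧
    Filter.Tendsto (fun k : ℕ => (prodSeq ν k) ^ (1 / (k : ℝ))) Filter.atTop Filter.atTop

/-- An admissible weight matrix, given as the set of quotient sequences `ν` of its weight
sequences `N` (Definition 4.6). -/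
def IsAdmissible (𝔑 : Set (ℕ → ℝ)) : Prop :=
  (∀ ν ∈ 𝔑, IsWeightSeqQ ν) ∧
  -- totally ordered under the pointwise order of the weight sequences
  (∀ ν ∈ 𝔑, ∀ ν' ∈ 𝔑,
    (∀ k, prodSeq ν k ≤ prodSeq ν' k) ∨ (∀ k, prodSeq ν' k ≤ prodSeq ν k)) ∧
  -- (1) for all N, Ṅ ∈ 𝔑: ν ≲ ν̇ or ν̇ ≲ ν
  (∀ ν ∈ 𝔑, ∀ ν' ∈ 𝔑,
    (∃ C > 0, ∀ k, ν k ≤ C * ν' k) ∨ (∃ C > 0, ∀ k, ν' k ≤ C * ν k)) ∧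
  -- (2) non-quasianalyticity
  (∀ ν ∈ 𝔑, Summable fun k => 1 / ν k) ∧
  -- (3) condition (4.3)
  (∀ ν ∈ 𝔑, ∃ C > 0, ∀ k : ℕ,
    ν (k + 1) / ν k ≤ (C + 1) + C * (ν (k + 1) / ((k : ℝ) + 1)) * tailSum ν (k + 1)) ∧
  -- (4) ν_k ≲ Ṅ_k^{1/k}
  (∀ ν ∈ 𝔑, ∃ ν' ∈ 𝔑, ∃ C > 0, ∀ k : ℕ, 1 ≤ k → ν k ≤ C * (prodSeq ν' k) ^ (1 / (k : ℝ))) ∧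
  -- (5) ν_{2k} ≲ ν̇_k
  (∀ ν ∈ 𝔑, ∃ ν' ∈ 𝔑, ∃ C > 0, ∀ k : ℕ, ν (2 * k) ≤ C * ν' k)

/-- The finite set of multi-indices `α ∈ ℕ^n` with `|α| ≤ p`. -/
noncomputable def midx (n p : ℕ) : Finset (Fin n → ℕ) :=
  (Fintype.piFinset fun _ : Fin n => Finset.range (p + 1)).filter (fun α => ∑ i, α i ≤ p)

/-- The Taylor polynomial `T_a^p F (x) = ∑_{|α| ≤ p} (x-a)^α F^α(a) / α!` of a jet `F`. -/
noncomputable def Tpoly {n : ℕ} (F : (Fin n → ℕ) → EuclideanSpace ℝ (Fin n) → ℝ)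
    (a : EuclideanSpace ℝ (Fin n)) (p : ℕ) : EuclideanSpace ℝ (Fin n) → ℝ :=
  fun x => ∑ α ∈ midx n p, (∏ i, (x i - a i) ^ (α i) / (Nat.factorial (α i) : ℝ)) * F α a

/-- The Whitney remainder `(R_a^p F)^α(x) = F^α(x) − ∑_{|β| ≤ p-|α|} (x-a)^β F^{α+β}(a)/β!`. -/
noncomputable def Rrem {n : ℕ} (F : (Fin n → ℕ) → EuclideanSpace ℝ (Fin n) → ℝ)
    (a : EuclideanSpace ℝ (Fin n)) (p : ℕ) (α : Fin n → ℕ)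
    (x : EuclideanSpace ℝ (Fin n)) : ℝ :=
  F α x - ∑ β ∈ midx n (p - ∑ i, α i),
    (∏ i, (x i - a i) ^ (β i) / (Nat.factorial (β i) : ℝ)) * F (α + β) a

/-- The partial derivative `∂_i f` of a function on `ℝ^n`. -/
noncomputable def pderivE {n : ℕ} (i : Fin n) (f : EuclideanSpace ℝ (Fin n) → ℝ) :
    EuclideanSpace ℝ (Fin n) → ℝ :=
  fun x => fderiv ℝ f x (EuclideanSpace.single i 1)

/-- The partial derivative `∂^β f` of a function on `ℝ^n` for a multi-index `β`. -/
noncomputable def pderivMulti {n : ℕ} (β : Fin n → ℕ) (f : EuclideanSpace ℝ (Fin n) → ℝ) :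
    EuclideanSpace ℝ (Fin n) → ℝ :=
  (List.finRange n).foldr (fun i g => (pderivE i)^[β i] g) f

/-- `F` is a Whitney jet of class `B^{M}` on `E` (Definition 3.3). -/
def IsWhitneyJet {n : ℕ} (M : ℕ → ℝ) (E : Set (EuclideanSpace ℝ (Fin n)))
    (F : (Fin n → ℕ) → EuclideanSpace ℝ (Fin n) → ℝ) : Prop :=
  (∀ α, ContinuousOn (F α) E) ∧
  ∃ C > 0, ∃ ρ > 0,
    (∀ α : Fin n → ℕ, ∀ a ∈ E, |F α a| ≤ C * ρ ^ (∑ i, α i) * M (∑ i, α i)) ∧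
    (∀ p : ℕ, ∀ α : Fin n → ℕ, ∑ i, α i ≤ p → ∀ a ∈ E, ∀ b ∈ E,
      |Rrem F a p α b| ≤ C * ρ ^ (p + 1) * M (p + 1) *
        ‖b - a‖ ^ (p + 1 - ∑ i, α i) / (Nat.factorial (p + 1 - ∑ i, α i) : ℝ))

/-- `f ∈ B^{M}(ℝ^n)`: `f` is smooth with global derivative bounds `C ρ^{|α|} M_{|α|}`. -/
def MemBM {n : ℕ} (M : ℕ → ℝ) (f : EuclideanSpace ℝ (Fin n) → ℝ) : Prop :=
  ContDiff ℝ (⊤ : ℕ∞) f ∧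
  ∃ C > 0, ∃ ρ > 0, ∀ α : Fin n → ℕ, ∀ x : EuclideanSpace ℝ (Fin n),
    |pderivMulti α f x| ≤ C * ρ ^ (∑ i, α i) * M (∑ i, α i)

/-- A weight matrix: a family of weight sequences (given by their quotient sequences)
totally ordered under the pointwise order. -/
def IsWeightMatrix (𝔐 : Set (ℕ → ℝ)) : Prop :=
  (∀ μ ∈ 𝔐, IsWeightSeqQ μ) ∧
  (∀ μ ∈ 𝔐, ∀ μ' ∈ 𝔐,
    (∀ k, prodSeq μ k ≤ prodSeq μ' k) ∨ (∀ k, prodSeq μ' k ≤ prodSeq μ k))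

/-! ### Weights, descendants and the function `h` -/

lemma inv_summable_shift {ν : ℕ → ℝ} (hs : Summable fun k => 1 / ν k) (k : ℕ) :
    Summable fun i : ℕ => 1 / ν (i + k) :=
  (summable_nat_add_iff (f := fun k => 1 / ν k) k).2 hs

lemma tailSum_pos {ν : ℕ → ℝ} (hν : IsWeightSeqQ ν) (hs : Summable fun k => 1 / ν k) (k : ℕ) :
    0 < tailSum ν k :=
  (inv_summable_shift hs k).tsum_pos (fun _ => (one_div_pos.2 (hν.2.2.1 _)).le) 0
    (one_div_pos.2 (hν.2.2.1 _))

lemma tailSum_succ {ν : ℕ → ℝ} (hs : Summable fun k => 1 / ν k) (k : ℕ) :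
    tailSum ν k = 1 / ν k + tailSum ν (k + 1) := by
  unfold tailSum
  rw [(inv_summable_shift hs k).tsum_eq_zero_add]
  simp only [zero_add, add_right_inj]
  refine tsum_congr fun i => ?_
  rw [add_right_comm, add_assoc]

lemma tauSeq_pos {ν : ℕ → ℝ} (hν : IsWeightSeqQ ν) (hs : Summable fun k => 1 / ν k) (k : ℕ) :
    0 < tauSeq ν k :=
  add_pos_of_nonneg_of_pos (div_nonneg k.cast_nonneg (hν.2.2.1 _).le) (tailSum_pos hν hs k)

lemma tauSeq_antitone {ν : ℕ → ℝ} (hν : IsWeightSeqQ ν) (hs : Summable fun k => 1 / ν k) :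
    Antitone (tauSeq ν) := by
  refine antitone_nat_of_succ_le fun k => ?_
  have h1 : 1 / ν (k + 1) ≤ 1 / ν k :=
    one_div_le_one_div_of_le (hν.2.2.1 _) (hν.2.1 k.le_succ)
  have h2 : ((k : ℝ) + 1) * (1 / ν (k + 1)) ≤ ((k : ℝ) + 1) * (1 / ν k) := by gcongr
  unfold tauSeq
  rw [tailSum_succ hs k]
  push_cast
  calc ((k : ℝ) + 1) / ν (k + 1) + tailSum ν (k + 1)
      = ((k : ℝ) + 1) * (1 / ν (k + 1)) + tailSum ν (k + 1) := by ring
    _ ≤ ((k : ℝ) + 1) * (1 / ν k) + tailSum ν (k + 1) := by gcongr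
    _ = _ := by ring

/-- `τ_k → 0`: otherwise `1/ν_k` would dominate a multiple of the harmonic series. -/
lemma exists_tauSeq_le {ν : ℕ → ℝ} (hν : IsWeightSeqQ ν) (hs : Summable fun k => 1 / ν k)
    {t : ℝ} (ht : 0 < t) : ∃ q : ℕ, tauSeq ν (q + 1) ≤ t := by
  by_contra! hcon
  have htail : Filter.Tendsto (tailSum ν) Filter.atTop (nhds 0) :=
    tendsto_sum_nat_add (fun k => 1 / ν k)
  obtain ⟨K, hK⟩ := Filter.eventually_atTop.1
    (htail.eventually (gt_mem_nhds (half_pos ht)))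
  have hle : ∀ i : ℕ, (t / 2) * ((i + (K + 1) : ℕ) : ℝ)⁻¹ ≤ 1 / ν (i + (K + 1)) := by
    intro i
    have h1 := hcon (i + K)
    have h2 := hK (i + K + 1) (by omega)
    unfold tauSeq at h1
    have h3 : t / 2 ≤ ((i + K + 1 : ℕ) : ℝ) / ν (i + K + 1) := by linarith
    have hp : (0 : ℝ) < ((i + K + 1 : ℕ) : ℝ) := by positivity
    have hn := hν.2.2.1 (i + K + 1)
    rw [← add_assoc]
    rw [le_div_iff₀ hn] at h3 ⊢
    calc t / 2 * ((i + K + 1 : ℕ) : ℝ)⁻¹ * ν (i + K + 1)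
        = (t / 2 * ν (i + K + 1)) * ((i + K + 1 : ℕ) : ℝ)⁻¹ := by ring
      _ ≤ ((i + K + 1 : ℕ) : ℝ) * ((i + K + 1 : ℕ) : ℝ)⁻¹ := by gcongr
      _ = 1 := mul_inv_cancel₀ hp.ne'
  have hsum : Summable fun i : ℕ => (t / 2) * ((i + (K + 1) : ℕ) : ℝ)⁻¹ :=
    Summable.of_nonneg_of_le (fun i => by positivity) hle (inv_summable_shift hs (K + 1))
  have h4 : Summable fun i : ℕ => ((i + (K + 1) : ℕ) : ℝ)⁻¹ :=
    (summable_mul_left_iff (half_pos ht).ne').1 hsum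
  exact Real.not_summable_natCast_inv
    ((summable_nat_add_iff (f := fun k : ℕ => ((k : ℕ) : ℝ)⁻¹) (K + 1)).1 h4)

/-- The sequence `s_k = ∏_{1 ≤ i ≤ k} 1/τ_i`. Up to the factor `τ_1^k` it is `S_k / k!` for the
descendant `S` of `ν`; geometric factors are irrelevant for the classes considered. -/
noncomputable def sS (ν : ℕ → ℝ) (k : ℕ) : ℝ := ∏ i ∈ Finset.range k, (tauSeq ν (i + 1))⁻¹

lemma sS_zero (ν : ℕ → ℝ) : sS ν 0 = 1 := by simp [sS]

lemma sS_succ (ν : ℕ → ℝ) (k : ℕ) : sS ν (k + 1) = sS ν k * (tauSeq ν (k + 1))⁻¹ :=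
  Finset.prod_range_succ _ _

lemma sS_pos {ν : ℕ → ℝ} (hν : IsWeightSeqQ ν) (hs : Summable fun k => 1 / ν k) (k : ℕ) :
    0 < sS ν k := Finset.prod_pos fun _ _ => inv_pos.2 (tauSeq_pos hν hs _)

lemma prodSeq_succ (ν : ℕ → ℝ) (k : ℕ) : prodSeq ν (k + 1) = prodSeq ν k * ν (k + 1) :=
  Finset.prod_range_succ _ _

lemma prodSeq_zero {ν : ℕ → ℝ} (hν : IsWeightSeqQ ν) : prodSeq ν 0 = 1 := by
  simp [prodSeq, hν.1]

lemma prodSeq_pos {ν : ℕ → ℝ} (hν : IsWeightSeqQ ν) (k : ℕ) : 0 < prodSeq ν k :=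
  Finset.prod_pos fun _ _ => hν.2.2.1 _

/-- Log-convexity and `N_0 = 1` give `N_i N_j ≤ N_{i+j}`. -/
lemma prodSeq_mul_le {ν : ℕ → ℝ} (hν : IsWeightSeqQ ν) (i j : ℕ) :
    prodSeq ν i * prodSeq ν j ≤ prodSeq ν (i + j) := by
  induction j with
  | zero => simp [prodSeq_zero hν]
  | succ j ih =>
    rw [prodSeq_succ, ← add_assoc, prodSeq_succ, ← mul_assoc]
    exact mul_le_mul ih (hν.2.1 (by omega)) (hν.2.2.1 _).le (prodSeq_pos hν _).le

/-- Up to a geometric factor the descendant of `N` is dominated by `N`, because `k/τ_k ≤ ν_k`. -/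
lemma factorial_mul_sS_le {ν : ℕ → ℝ} (hν : IsWeightSeqQ ν) (hs : Summable fun k => 1 / ν k)
    (k : ℕ) : (Nat.factorial k : ℝ) * sS ν k ≤ prodSeq ν k := by
  induction k with
  | zero => simp [sS_zero, prodSeq_zero hν]
  | succ k ih =>
    have h1 : ((k : ℝ) + 1) * (tauSeq ν (k + 1))⁻¹ ≤ ν (k + 1) := by
      rw [← div_eq_mul_inv, div_le_iff₀ (tauSeq_pos hν hs _), ← div_le_iff₀' (hν.2.2.1 _)]
      have := (tailSum_pos hν hs (k + 1)).le
      unfold tauSeq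
      push_cast
      linarith
    have h0 := tauSeq_pos hν hs (k + 1)
    rw [sS_succ, prodSeq_succ, Nat.factorial_succ]
    push_cast
    calc ((k : ℝ) + 1) * (Nat.factorial k : ℝ) * (sS ν k * (tauSeq ν (k + 1))⁻¹)
        = ((Nat.factorial k : ℝ) * sS ν k) * (((k : ℝ) + 1) * (tauSeq ν (k + 1))⁻¹) := by ring
      _ ≤ _ := mul_le_mul ih h1 (by positivity) (prodSeq_pos hν _).le

/-- The hypothesis linking `μ` and `ν` says that `M` is dominated by the descendant of `N`. -/
lemma prodSeq_le_factorial_sS {μ ν : ℕ → ℝ} (hμ : IsWeightSeqQ μ) (hν : IsWeightSeqQ ν)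
    (hs : Summable fun k => 1 / ν k)
    (h1 : ∃ C > 0, ∀ k : ℕ, 1 ≤ k → tailSum ν k ≤ C * ((k : ℝ) / μ k))
    (h2 : ∃ C > 0, ∀ k : ℕ, μ k ≤ C * ν k) :
    ∃ D > 0, ∀ k, prodSeq μ k ≤ D ^ k * (Nat.factorial k : ℝ) * sS ν k := by
  obtain ⟨C₁, hC₁, h1⟩ := h1
  obtain ⟨C₂, hC₂, h2⟩ := h2
  refine ⟨C₁ + C₂, by positivity, fun k => ?_⟩
  induction k with
  | zero => simp [sS_zero, prodSeq_zero hμ]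
  | succ k ih =>
    have hm := hμ.2.2.1 (k + 1)
    have hn := hν.2.2.1 (k + 1)
    have ht := tauSeq_pos hν hs (k + 1)
    have h3 : μ (k + 1) ≤ (C₁ + C₂) * ((k : ℝ) + 1) * (tauSeq ν (k + 1))⁻¹ := by
      rw [← div_eq_mul_inv, le_div_iff₀ ht, ← le_div_iff₀' hm]
      have h4 := h1 (k + 1) (by omega)
      have h5 : 1 / ν (k + 1) ≤ C₂ / μ (k + 1) := by
        rw [div_le_div_iff₀ hn hm]; linarith [h2 (k + 1)]
      have h6 : ((k : ℝ) + 1) * (1 / ν (k + 1)) ≤ ((k : ℝ) + 1) * (C₂ / μ (k + 1)) := by gcongr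
      unfold tauSeq
      push_cast at h4 ⊢
      calc ((k : ℝ) + 1) / ν (k + 1) + tailSum ν (k + 1)
          = ((k : ℝ) + 1) * (1 / ν (k + 1)) + tailSum ν (k + 1) := by ring
        _ ≤ ((k : ℝ) + 1) * (C₂ / μ (k + 1)) + C₁ * (((k : ℝ) + 1) / μ (k + 1)) :=
            add_le_add h6 h4
        _ = _ := by ring
    rw [prodSeq_succ, sS_succ, Nat.factorial_succ]
    push_cast
    have hs0 := sS_pos hν hs k
    calc prodSeq μ k * μ (k + 1)
        ≤ ((C₁ + C₂) ^ k * (Nat.factorial k : ℝ) * sS ν k) *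
          ((C₁ + C₂) * ((k : ℝ) + 1) * (tauSeq ν (k + 1))⁻¹) :=
          mul_le_mul ih h3 hm.le (by positivity)
      _ = _ := by ring

lemma hFun_le {ν : ℕ → ℝ} (hν : IsWeightSeqQ ν) (hs : Summable fun k => 1 / ν k)
    {t : ℝ} (ht : 0 ≤ t) (k : ℕ) : hFun (sS ν) t ≤ sS ν k * t ^ k := by
  refine ciInf_le ⟨0, ?_⟩ k
  rintro _ ⟨i, rfl⟩
  have := sS_pos hν hs i
  positivity

lemma hFun_le_one {ν : ℕ → ℝ} (hν : IsWeightSeqQ ν) (hs : Summable fun k => 1 / ν k)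
    {t : ℝ} (ht : 0 ≤ t) : hFun (sS ν) t ≤ 1 := by
  simpa [sS_zero] using hFun_le hν hs ht 0

lemma hFun_mono {ν : ℕ → ℝ} (hν : IsWeightSeqQ ν) (hs : Summable fun k => 1 / ν k)
    {t t' : ℝ} (ht : 0 ≤ t) (h : t ≤ t') : hFun (sS ν) t ≤ hFun (sS ν) t' := by
  refine le_ciInf fun k => (hFun_le hν hs ht k).trans ?_
  have := (sS_pos hν hs k).le
  gcongr

/-- The counting function `Γ(t) = #{k ≥ 1 : τ_k > t}`, the largest index up to which
`k ↦ s_k t^k` decreases. -/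
noncomputable def gam (ν : ℕ → ℝ) (t : ℝ) : ℕ := sInf {q : ℕ | tauSeq ν (q + 1) ≤ t}

lemma tauSeq_gam_le {ν : ℕ → ℝ} (hν : IsWeightSeqQ ν) (hs : Summable fun k => 1 / ν k)
    {t : ℝ} (ht : 0 < t) : tauSeq ν (gam ν t + 1) ≤ t :=
  Nat.sInf_mem (s := {q : ℕ | tauSeq ν (q + 1) ≤ t}) (exists_tauSeq_le hν hs ht)

lemma lt_tauSeq_of_lt_gam {ν : ℕ → ℝ} {t : ℝ} {i : ℕ} (hi : i < gam ν t) :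
    t < tauSeq ν (i + 1) := by
  have := Nat.notMem_of_lt_sInf hi
  simpa using this

lemma gam_le_of {ν : ℕ → ℝ} {t : ℝ} {q : ℕ} (h : tauSeq ν (q + 1) ≤ t) : gam ν t ≤ q :=
  Nat.sInf_le h

lemma gam_anti {ν : ℕ → ℝ} (hν : IsWeightSeqQ ν) (hs : Summable fun k => 1 / ν k)
    {t t' : ℝ} (ht : 0 < t) (h : t ≤ t') : gam ν t' ≤ gam ν t :=
  gam_le_of ((tauSeq_gam_le hν hs ht).trans h)

lemma lt_gam_of {ν : ℕ → ℝ} (hν : IsWeightSeqQ ν) (hs : Summable fun k => 1 / ν k)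
    {t : ℝ} (ht : 0 < t) {j : ℕ} (h : t < tauSeq ν (j + 1)) : j < gam ν t := by
  by_contra! hc
  exact absurd ((tauSeq_antitone hν hs (by omega : gam ν t + 1 ≤ j + 1)).trans
    (tauSeq_gam_le hν hs ht)) (not_le.2 h)

/-- Consecutive quotients of `k ↦ s_k t^k` are `t/τ_k`, which is less than `1` for `k ≤ Γ(t)`. -/
lemma sS_mul_pow_anti {ν : ℕ → ℝ} (hν : IsWeightSeqQ ν) (hs : Summable fun k => 1 / ν k)
    {t : ℝ} (ht : 0 < t) {k l : ℕ} (hkl : k ≤ l) (hl : l ≤ gam ν t) :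
    sS ν l * t ^ l ≤ sS ν k * t ^ k := by
  induction l, hkl using Nat.le_induction with
  | base => rfl
  | succ l hl' ih =>
    refine le_trans ?_ (ih (by omega))
    have h1 : (tauSeq ν (l + 1))⁻¹ * t ≤ 1 := by
      rw [inv_mul_le_iff₀ (tauSeq_pos hν hs _), mul_one]
      exact (lt_tauSeq_of_lt_gam (by omega)).le
    have := sS_pos hν hs l
    rw [sS_succ, pow_succ]
    calc sS ν l * (tauSeq ν (l + 1))⁻¹ * (t ^ l * t)
        = sS ν l * t ^ l * ((tauSeq ν (l + 1))⁻¹ * t) := by ring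
      _ ≤ sS ν l * t ^ l * 1 := by gcongr
      _ = _ := mul_one _

lemma sS_mul_pow_mono {ν : ℕ → ℝ} (hν : IsWeightSeqQ ν) (hs : Summable fun k => 1 / ν k)
    {t : ℝ} (ht : 0 < t) {k : ℕ} (hk : gam ν t ≤ k) :
    sS ν (gam ν t) * t ^ (gam ν t) ≤ sS ν k * t ^ k := by
  induction k, hk using Nat.le_induction with
  | base => rfl
  | succ k hk ih =>
    refine ih.trans ?_
    have h1 : 1 ≤ (tauSeq ν (k + 1))⁻¹ * t := by
      rw [le_inv_mul_iff₀ (tauSeq_pos hν hs _), mul_one]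
      exact (tauSeq_antitone hν hs (by omega)).trans (tauSeq_gam_le hν hs ht)
    have := sS_pos hν hs k
    rw [sS_succ, pow_succ]
    calc sS ν k * t ^ k = sS ν k * t ^ k * 1 := (mul_one _).symm
      _ ≤ sS ν k * t ^ k * ((tauSeq ν (k + 1))⁻¹ * t) := by gcongr
      _ = _ := by ring

/-- The infimum defining `h(t)` is attained at `k = Γ(t)`. -/
lemma hFun_eq {ν : ℕ → ℝ} (hν : IsWeightSeqQ ν) (hs : Summable fun k => 1 / ν k)
    {t : ℝ} (ht : 0 < t) : hFun (sS ν) t = sS ν (gam ν t) * t ^ (gam ν t) := by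
  refine le_antisymm (hFun_le hν hs ht.le _) (le_ciInf fun k => ?_)
  rcases le_total (gam ν t) k with h | h
  · exact sS_mul_pow_mono hν hs ht h
  · exact sS_mul_pow_anti hν hs ht h le_rfl

lemma hFun_pos {ν : ℕ → ℝ} (hν : IsWeightSeqQ ν) (hs : Summable fun k => 1 / ν k)
    {t : ℝ} (ht : 0 < t) : 0 < hFun (sS ν) t := by
  rw [hFun_eq hν hs ht]
  have := sS_pos hν hs (gam ν t)
  positivity

/-- Condition `ν_{2k} ≲ ν'_k` bounds `h` for `ν` by the square of `h` for `ν'`, after a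
dilation: `τ'_k ≲ τ_{2k}`, hence `s_{2k} ≤ A^{2k} (s'_k)²`. -/
lemma hFun_le_sq {ν ν' : ℕ → ℝ} (hν : IsWeightSeqQ ν) (hs : Summable fun k => 1 / ν k)
    (hν' : IsWeightSeqQ ν') (hs' : Summable fun k => 1 / ν' k)
    (h : ∃ C > 0, ∀ k : ℕ, ν (2 * k) ≤ C * ν' k) :
    ∃ B > 0, ∀ t > 0, hFun (sS ν) (B * t) ≤ hFun (sS ν') t ^ 2 := by
  obtain ⟨C, hC, h⟩ := h
  have hinv : ∀ k, 1 / ν' k ≤ C * (1 / ν (2 * k)) := fun k => by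
    rw [mul_one_div, div_le_div_iff₀ (hν'.2.2.1 _) (hν.2.2.1 _)]; linarith [h k]
  have htau : ∀ k, tauSeq ν' k ≤ C * tauSeq ν (2 * k) := by
    intro k
    have hinj : Function.Injective fun i : ℕ => 2 * i := fun a b hab => by simpa using hab
    have hsum2 : Summable fun i : ℕ => 1 / ν (2 * i + 2 * k) :=
      (inv_summable_shift hs (2 * k)).comp_injective hinj
    have h1 : tailSum ν' k ≤ C * tailSum ν (2 * k) := by
      unfold tailSum
      calc ∑' i : ℕ, 1 / ν' (i + k) ≤ ∑' i : ℕ, C * (1 / ν (2 * i + 2 * k)) :=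
            (inv_summable_shift hs' k).tsum_le_tsum
              (fun i => by rw [← mul_add]; exact hinv _) (hsum2.mul_left C)
        _ = C * ∑' i : ℕ, 1 / ν (2 * i + 2 * k) := tsum_mul_left
        _ ≤ C * ∑' i : ℕ, 1 / ν (i + 2 * k) := by
            refine mul_le_mul_of_nonneg_left ?_ hC.le
            exact Summable.tsum_le_tsum_of_inj (fun i : ℕ => 2 * i) hinj
              (fun _ _ => (one_div_pos.2 (hν.2.2.1 _)).le) (fun _ => le_rfl) hsum2
              (inv_summable_shift hs (2 * k))
    have h2 : (k : ℝ) / ν' k ≤ C * (((2 * k : ℕ) : ℝ) / ν (2 * k)) := by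
      have hp : 0 ≤ C * (1 / ν (2 * k)) := by have := hν.2.2.1 (2 * k); positivity
      calc (k : ℝ) / ν' k = k * (1 / ν' k) := by ring
        _ ≤ k * (C * (1 / ν (2 * k))) := by gcongr; exact hinv k
        _ ≤ (2 * k) * (C * (1 / ν (2 * k))) := by
            refine mul_le_mul_of_nonneg_right ?_ hp
            have : (0 : ℝ) ≤ k := k.cast_nonneg
            linarith
        _ = _ := by push_cast; ring
    unfold tauSeq
    linarith
  have hsS : ∀ k, sS ν (2 * k) ≤ (C ^ k * sS ν' k) ^ 2 := by
    intro k
    induction k with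
    | zero => simp [sS_zero]
    | succ k ih =>
      have ht := tauSeq_pos hν hs (2 * k + 1)
      have ht2 := tauSeq_pos hν hs (2 * (k + 1))
      have ht' := tauSeq_pos hν' hs' (k + 1)
      have h1 : (tauSeq ν (2 * (k + 1)))⁻¹ ≤ C * (tauSeq ν' (k + 1))⁻¹ := by
        rw [← div_eq_mul_inv, inv_le_comm₀ ht2 (by positivity), inv_div, div_le_iff₀ hC]
        linarith [htau (k + 1)]
      have h2 : (tauSeq ν (2 * k + 1))⁻¹ ≤ C * (tauSeq ν' (k + 1))⁻¹ := by
        refine le_trans ?_ h1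
        gcongr
        exact tauSeq_antitone hν hs (by omega)
      have e : sS ν (2 * (k + 1)) =
          sS ν (2 * k) * ((tauSeq ν (2 * k + 1))⁻¹ * (tauSeq ν (2 * (k + 1)))⁻¹) := by
        rw [show 2 * (k + 1) = 2 * k + 1 + 1 by ring, sS_succ, sS_succ, mul_assoc]
      rw [e, sS_succ]
      calc _ ≤ (C ^ k * sS ν' k) ^ 2 *
            ((C * (tauSeq ν' (k + 1))⁻¹) * (C * (tauSeq ν' (k + 1))⁻¹)) := by gcongr
        _ = _ := by ring
  refine ⟨1 / (C + 1), by positivity, fun t ht => ?_⟩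
  have hs'p := hFun_pos hν' hs' ht
  have hk := hFun_eq hν' hs' ht
  set k := gam ν' t
  calc hFun (sS ν) (1 / (C + 1) * t) ≤ sS ν (2 * k) * (1 / (C + 1) * t) ^ (2 * k) :=
        hFun_le hν hs (by positivity) _
    _ ≤ (C ^ k * sS ν' k) ^ 2 * (1 / (C + 1) * t) ^ (2 * k) := by
        gcongr; exact hsS k
    _ = ((C * (1 / (C + 1))) ^ k) ^ 2 * (sS ν' k * t ^ k) ^ 2 := by ring
    _ ≤ 1 * (sS ν' k * t ^ k) ^ 2 := by
        gcongr
        refine pow_le_one₀ (by positivity) (pow_le_one₀ (by positivity) ?_)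
        rw [mul_one_div, div_le_one (by positivity)]; linarith
    _ = hFun (sS ν') t ^ 2 := by rw [one_mul, hk]

/-- Iterating the condition `ν_{2k} ≲ ν'_k`: arbitrarily high powers of `h` are available after
passing to a larger weight and dilating. -/
lemma exists_hFun_le_pow {𝔑 : Set (ℕ → ℝ)} (hadm : IsAdmissible 𝔑) (e : ℕ) :
    ∀ ν ∈ 𝔑, ∃ ν' ∈ 𝔑, ∃ B > 0, ∀ t > 0, hFun (sS ν) (B * t) ≤ hFun (sS ν') t ^ (2 ^ e) := by
  obtain ⟨hw, -, -, hsum, -, -, h5⟩ := hadm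
  induction e with
  | zero => exact fun ν hν => ⟨ν, hν, 1, one_pos, fun t _ => by simp⟩
  | succ e ih =>
    intro ν hν
    obtain ⟨ν₁, hν₁, B₁, hB₁, h₁⟩ := ih ν hν
    obtain ⟨ν₂, hν₂, hC⟩ := h5 ν₁ hν₁
    obtain ⟨B₂, hB₂, h₂⟩ :=
      hFun_le_sq (hw _ hν₁) (hsum _ hν₁) (hw _ hν₂) (hsum _ hν₂) hC
    refine ⟨ν₂, hν₂, B₁ * B₂, by positivity, fun t ht => ?_⟩
    have hp := hFun_pos (hw _ hν₁) (hsum _ hν₁) (mul_pos hB₂ ht)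
    calc hFun (sS ν) (B₁ * B₂ * t) ≤ hFun (sS ν₁) (B₂ * t) ^ 2 ^ e := by
          rw [mul_assoc]; exact h₁ _ (by positivity)
      _ ≤ (hFun (sS ν₂) t ^ 2) ^ 2 ^ e := by gcongr; exact h₂ t ht
      _ = _ := by rw [← pow_mul]; congr 1; ring

/-! ### Optimal cutoffs on the line -/

/-- The moving average of `f` over the window `[x - w, x]`. -/
noncomputable def avg (w : ℝ) (f : ℝ → ℝ) (x : ℝ) : ℝ := w⁻¹ * ∫ y in (x - w)..x, f y

lemma avg_hasDerivAt {w : ℝ} {f : ℝ → ℝ} (hf : Continuous f) (x : ℝ) :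
    HasDerivAt (avg w f) ((f x - f (x - w)) / w) x := by
  have h1 : HasDerivAt (fun u => ∫ y in (0:ℝ)..u, f y) (f x) x :=
    intervalIntegral.integral_hasDerivAt_right (hf.intervalIntegrable _ _)
      hf.aestronglyMeasurable.stronglyMeasurableAtFilter hf.continuousAt
  have h2 : HasDerivAt (fun u => ∫ y in (0:ℝ)..u, f y) (f (x - w)) (x - w) :=
    intervalIntegral.integral_hasDerivAt_right (hf.intervalIntegrable _ _)
      hf.aestronglyMeasurable.stronglyMeasurableAtFilter hf.continuousAt
  have h3 := (h1.sub (h2.comp_sub_const x w)).const_mul w⁻¹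
  have e : avg w f = fun u => w⁻¹ * ((∫ y in (0:ℝ)..u, f y) - ∫ y in (0:ℝ)..(u - w), f y) := by
    funext u
    rw [avg, intervalIntegral.integral_interval_sub_left (hf.intervalIntegrable _ _)
      (hf.intervalIntegrable _ _)]
  rw [e, div_eq_inv_mul]
  exact h3

lemma avg_continuous {w : ℝ} {f : ℝ → ℝ} (hf : Continuous f) : Continuous (avg w f) :=
  continuous_iff_continuousAt.2 fun x => (avg_hasDerivAt hf x).continuousAt

/-- The derivative of the moving average of `f` is the moving average of `f'`. -/
lemma avg_deriv_eq {w : ℝ} {f f' : ℝ → ℝ} (h : ∀ x, HasDerivAt f (f' x) x)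
    (hf' : Continuous f') (x : ℝ) : (f x - f (x - w)) / w = avg w f' x := by
  rw [avg, intervalIntegral.integral_eq_sub_of_hasDerivAt (fun y _ => h y)
    (hf'.intervalIntegrable _ _), div_eq_inv_mul]

lemma abs_avg_le {w D : ℝ} (hw : 0 < w) {f : ℝ → ℝ} (h : ∀ x, |f x| ≤ D) (x : ℝ) :
    |avg w f x| ≤ D := by
  have h1 : ‖∫ y in (x - w)..x, f y‖ ≤ D * |x - (x - w)| :=
    intervalIntegral.norm_integral_le_of_norm_le_const fun y _ => h y
  rw [sub_sub_cancel, abs_of_pos hw, Real.norm_eq_abs] at h1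
  rw [avg, abs_mul, abs_of_pos (inv_pos.2 hw), inv_mul_le_iff₀ hw]
  linarith

lemma avg_const_on {w c : ℝ} (hw : 0 < w) {f : ℝ → ℝ} {x : ℝ}
    (h : ∀ y ∈ Set.Icc (x - w) x, f y = c) : avg w f x = c := by
  have : ∫ y in (x - w)..x, f y = ∫ y in (x - w)..x, c :=
    intervalIntegral.integral_congr fun y hy => by
      rw [Set.uIcc_of_le (by linarith)] at hy; exact h y hy
  rw [avg, this, intervalIntegral.integral_const, sub_sub_cancel, smul_eq_mul,
    inv_mul_cancel_left₀ hw.ne']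

/-- Averaging over a window of width `w` moves a function by at most `w` times its Lipschitz
constant; this makes the iteration with summable windows converge. -/
lemma abs_avg_sub_le {w D : ℝ} (hw : 0 < w) {f f' : ℝ → ℝ} (h : ∀ x, HasDerivAt f (f' x) x)
    (hD : ∀ x, |f' x| ≤ D) (x : ℝ) : |avg w f x - f x| ≤ w * D := by
  have hf : Continuous f := continuous_iff_continuousAt.2 fun x => (h x).continuousAt
  have hLip : ∀ y, |f y - f x| ≤ D * |y - x| := fun y =>
    Convex.norm_image_sub_le_of_norm_hasDerivWithin_le (s := Set.univ)
      (fun z _ => (h z).hasDerivWithinAt) (fun z _ => hD z) convex_univ trivial trivial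
  have e : avg w f x - f x = w⁻¹ * ∫ y in (x - w)..x, (f y - f x) := by
    rw [intervalIntegral.integral_sub (hf.intervalIntegrable _ _) (by simp),
      intervalIntegral.integral_const, sub_sub_cancel, smul_eq_mul, mul_sub,
      inv_mul_cancel_left₀ hw.ne', avg]
  have hD0 : 0 ≤ D := (abs_nonneg _).trans (hD 0)
  have h1 : ‖∫ y in (x - w)..x, (f y - f x)‖ ≤ (D * w) * |x - (x - w)| :=
    intervalIntegral.norm_integral_le_of_norm_le_const fun y hy => by
      rw [Set.uIoc_of_le (by linarith)] at hy
      refine (hLip y).trans (mul_le_mul_of_nonneg_left ?_ hD0)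
      rw [abs_le]; constructor <;> linarith [hy.1, hy.2]
  rw [sub_sub_cancel, abs_of_pos hw, Real.norm_eq_abs] at h1
  rw [e, abs_mul, abs_of_pos (inv_pos.2 hw), inv_mul_le_iff₀ hw]
  linarith

/-- Iterated moving averages with windows `w 0, …, w (m - 1)` of a function `f`, together with
their derivatives: `iterAvg w f m j` is the `j`-th derivative of the `m`-th average for `j ≤ m`,
and a junk value for `j > m`. -/
noncomputable def iterAvg (w : ℕ → ℝ) (f : ℝ → ℝ) : ℕ → ℕ → ℝ → ℝ
  | 0, _ => f
  | (m + 1), j => if j ≤ m then avg (w m) (iterAvg w f m j)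
      else fun x => (iterAvg w f m m x - iterAvg w f m m (x - w m)) / w m

lemma iterAvg_succ_le {w : ℕ → ℝ} {f : ℝ → ℝ} {m j : ℕ} (h : j ≤ m) :
    iterAvg w f (m + 1) j = avg (w m) (iterAvg w f m j) := by simp [iterAvg, h]

lemma iterAvg_succ_self {w : ℕ → ℝ} {f : ℝ → ℝ} (m : ℕ) :
    iterAvg w f (m + 1) (m + 1) =
      fun x => (iterAvg w f m m x - iterAvg w f m m (x - w m)) / w m := by simp [iterAvg]

/-- `iterAvg w f m` is a chain of successive derivatives up to order `m`. The `j`-th derivative of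
the `m`-th average is a `j`-fold difference quotient with steps `w 0, …, w (j - 1)`, averaged over
the remaining windows, so each derivative costs a factor `2 / w i`. -/
lemma iterAvg_spec {w : ℕ → ℝ} (hw : ∀ i, 0 < w i) {f : ℝ → ℝ} (hf : Continuous f)
    (hf1 : ∀ x, |f x| ≤ 1) (m : ℕ) :
    (∀ j ≤ m, Continuous (iterAvg w f m j) ∧
      ∀ x, |iterAvg w f m j x| ≤ ∏ i ∈ Finset.range j, 2 / w i) ∧
    (∀ j < m, ∀ x, HasDerivAt (iterAvg w f m j) (iterAvg w f m (j + 1) x) x) := by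
  induction m with
  | zero =>
    refine ⟨fun j hj => ?_, fun j hj => by omega⟩
    obtain rfl : j = 0 := by omega
    simpa [iterAvg] using ⟨hf, hf1⟩
  | succ m ih =>
    obtain ⟨ih1, ih2⟩ := ih
    refine ⟨fun j hj => ?_, fun j hj x => ?_⟩
    · rcases Nat.lt_or_ge m j with h | h
      · obtain rfl : j = m + 1 := by omega
        obtain ⟨hc, hb⟩ := ih1 m le_rfl
        rw [iterAvg_succ_self]
        refine ⟨by fun_prop, fun x => ?_⟩
        rw [abs_div, abs_of_pos (hw m), Finset.prod_range_succ, div_le_iff₀ (hw m), mul_assoc,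
          div_mul_cancel₀ _ (hw m).ne']
        have := abs_sub (iterAvg w f m m x) (iterAvg w f m m (x - w m))
        linarith [hb x, hb (x - w m)]
      · rw [iterAvg_succ_le h]
        obtain ⟨hc, hb⟩ := ih1 j h
        exact ⟨avg_continuous hc, abs_avg_le (hw m) hb⟩
    · rw [iterAvg_succ_le (by omega : j ≤ m)]
      rcases Nat.lt_or_ge j m with h | h
      · rw [iterAvg_succ_le (by omega : j + 1 ≤ m),
          ← avg_deriv_eq (ih2 j h) (ih1 (j + 1) h).1 x]
        exact avg_hasDerivAt (ih1 j h.le).1 x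
      · obtain rfl : j = m := by omega
        rw [iterAvg_succ_self]
        exact avg_hasDerivAt (ih1 j le_rfl).1 x

lemma iterAvg_zero_spec {w : ℕ → ℝ} (hw : ∀ i, 0 < w i) {f : ℝ → ℝ} {r : ℝ}
    (h0 : ∀ x ≤ 0, f x = 0) (h1 : ∀ x, r ≤ x → f x = 1) (m : ℕ) :
    (∀ x ≤ 0, iterAvg w f m 0 x = 0) ∧
    (∀ x, r + ∑ i ∈ Finset.range m, w i ≤ x → iterAvg w f m 0 x = 1) := by
  induction m with
  | zero => simpa [iterAvg] using ⟨h0, h1⟩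
  | succ m ih =>
    rw [iterAvg_succ_le (Nat.zero_le m)]
    refine ⟨fun x hx => avg_const_on (hw m) fun y hy => ih.1 y (hy.2.trans hx),
      fun x hx => avg_const_on (hw m) fun y hy => ih.2 y ?_⟩
    rw [Finset.sum_range_succ] at hx
    linarith [hy.1]

/-- A smooth step obtained as an infinite iterated moving average (equivalently, an infinite
convolution of box kernels) of a ramp; `Φ j` is its `j`-th derivative. -/
lemma exists_step {r : ℝ} (hr : 0 < r) {w : ℕ → ℝ} (hw : ∀ i, 0 < w i) (hsum : Summable w)
    (hle : ∑' i, w i ≤ r / 2) :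
    ∃ Φ : ℕ → ℝ → ℝ, (∀ j x, HasDerivAt (Φ j) (Φ (j + 1) x) x) ∧
      (∀ j x, |Φ j x| ≤ ∏ i ∈ Finset.range j, 2 / w i) ∧
      (∀ x ≤ 0, Φ 0 x = 0) ∧ (∀ x, r ≤ x → Φ 0 x = 1) := by
  set f : ℝ → ℝ := fun x => max 0 (min 1 (2 * x / r)) with hf
  have hfc : Continuous f := by fun_prop
  have hf0 : ∀ x ≤ 0, f x = 0 := fun x hx =>
    max_eq_left ((min_le_right _ _).trans (div_nonpos_of_nonpos_of_nonneg (by linarith) hr.le))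
  have hf1 : ∀ x, r / 2 ≤ x → f x = 1 := fun x hx => by
    have : 1 ≤ 2 * x / r := by rw [le_div_iff₀ hr]; linarith
    simp [hf, min_eq_left this]
  have hfb : ∀ x, |f x| ≤ 1 := fun x => by
    rw [abs_of_nonneg (le_max_left _ _)]
    exact max_le zero_le_one (min_le_left _ _)
  have hspec := iterAvg_spec hw hfc hfb
  set D : ℕ → ℝ := fun j => ∏ i ∈ Finset.range j, 2 / w i
  have hdist : ∀ j m x, j + 1 ≤ m →
      dist (iterAvg w f m j x) (iterAvg w f (m + 1) j x) ≤ w m * D (j + 1) := by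
    intro j m x hm
    rw [dist_comm, Real.dist_eq, iterAvg_succ_le (by omega)]
    exact abs_avg_sub_le (hw m) ((hspec m).2 j (by omega)) ((hspec m).1 (j + 1) hm).2 x
  have hdist' : ∀ j x, ∀ m, dist (iterAvg w f (m + (j + 1)) j x)
      (iterAvg w f (m + 1 + (j + 1)) j x) ≤ w (m + (j + 1)) * D (j + 1) := by
    intro j x m
    rw [add_right_comm]
    exact hdist j _ x (by omega)
  have hsum' : ∀ j, Summable fun m => w (m + (j + 1)) * D (j + 1) := fun j =>
    ((summable_nat_add_iff (j + 1)).2 hsum).mul_right _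
  have hlim : ∀ j x, ∃ l, Filter.Tendsto (fun m => iterAvg w f m j x) Filter.atTop (nhds l) := by
    intro j x
    obtain ⟨l, hl⟩ := cauchySeq_tendsto_of_complete
      (cauchySeq_of_dist_le_of_summable _ (hdist' j x) (hsum' j))
    exact ⟨l, (Filter.tendsto_add_atTop_iff_nat (j + 1)).1 hl⟩
  choose Φ hΦ using hlim
  have hunif : ∀ j, TendstoUniformly (fun m x => iterAvg w f m j x) (Φ j) Filter.atTop := by
    intro j
    rw [Metric.tendstoUniformly_iff]
    intro ε hε
    have htail := tendsto_sum_nat_add fun m => w (m + (j + 1)) * D (j + 1)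
    have hev := (Filter.tendsto_sub_atTop_nat (j + 1)).eventually
      (htail.eventually (gt_mem_nhds hε))
    filter_upwards [hev, Filter.eventually_ge_atTop (j + 1)] with m hm hmj x
    have h1 := dist_le_tsum_of_dist_le_of_tendsto _ (hdist' j x) (hsum' j)
      ((Filter.tendsto_add_atTop_iff_nat (j + 1)).2 (hΦ j x)) (m - (j + 1))
    rw [Nat.sub_add_cancel hmj] at h1
    rw [dist_comm]
    refine h1.trans_lt ?_
    simpa only [add_comm (m - (j + 1))] using hm
  refine ⟨Φ, fun j x => ?_, fun j x => ?_, fun x hx => ?_, fun x hx => ?_⟩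
  · refine hasDerivAt_of_tendstoUniformly (hunif (j + 1)) ?_ (hΦ j) x
    filter_upwards [Filter.eventually_gt_atTop j] with m hm x using (hspec m).2 j hm x
  · refine le_of_tendsto (hΦ j x).abs ?_
    filter_upwards [Filter.eventually_ge_atTop j] with m hm using ((hspec m).1 j hm).2 x
  · exact tendsto_nhds_unique (hΦ 0 x)
      (tendsto_const_nhds.congr fun m => ((iterAvg_zero_spec hw hf0 hf1 m).1 x hx).symm)
  · refine tendsto_nhds_unique (hΦ 0 x)
      (tendsto_const_nhds.congr fun m => ((iterAvg_zero_spec hw hf0 hf1 m).2 x ?_).symm)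
    linarith [hsum.sum_le_tsum (Finset.range m) fun i _ => (hw i).le]

lemma iteratedDeriv_of_family {Φ : ℕ → ℝ → ℝ} (h : ∀ j x, HasDerivAt (Φ j) (Φ (j + 1) x) x)
    (j : ℕ) : iteratedDeriv j (Φ 0) = Φ j := by
  induction j with
  | zero => exact iteratedDeriv_zero
  | succ j ih => rw [iteratedDeriv_succ, ih]; exact funext fun x => (h j x).deriv

/-- Optimal cut-offs of class `B^{N}`: a smooth step on `[0, r]` whose derivatives cost only a
factor `1 / h(L r)` over the weights. With `k = Γ(4 L r)`, the first `k` windows have size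
`r / (4 k)` and the later ones are proportional to `1 / ν_i`; the sum of the latter is controlled
by `τ_{k+1} ≤ 4 L r`, and `k^j ≤ 4^k j!` turns the cost of the first windows into `h`. -/
lemma exists_cutoff {ν : ℕ → ℝ} (hν : IsWeightSeqQ ν) (hs : Summable fun k => 1 / ν k)
    {L : ℝ} (hL : 0 < L) {r : ℝ} (hr : 0 < r) :
    ∃ H : ℝ → ℝ, ContDiff ℝ (⊤ : ℕ∞) H ∧
      (∀ j x, ‖iteratedFDeriv ℝ j H x‖ ≤ (32 * L) ^ j * prodSeq ν j / hFun (sS ν) (L * r)) ∧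
      (∀ x ≤ 0, H x = 0) ∧ (∀ x, r ≤ x → H x = 1) := by
  set t := 4 * L * r with ht_def
  have ht : 0 < t := by positivity
  set k := gam ν t with hk
  set w : ℕ → ℝ := fun i => if i < k then r / (4 * k) else (16 * L)⁻¹ * (1 / ν (i + 1)) with hw_def
  have hwlt : ∀ i, i < k → w i = r / (4 * k) := fun i hi => by simp [hw_def, hi]
  have hwge : ∀ i, k ≤ i → w i = (16 * L)⁻¹ * (1 / ν (i + 1)) := fun i hi => by
    simp [hw_def, not_lt.2 hi]
  have hw : ∀ i, 0 < w i := by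
    intro i
    rcases lt_or_ge i k with h | h
    · rw [hwlt i h]
      have : (0 : ℝ) < k := by exact_mod_cast (by omega : 0 < k)
      positivity
    · rw [hwge i h]
      have := hν.2.2.1 (i + 1)
      positivity
  have hshift : (fun i => w (i + k)) = fun i => (16 * L)⁻¹ * (1 / ν (i + (k + 1))) := by
    funext i; rw [hwge _ (by omega), add_assoc]
  have hsumw : Summable w := by
    rw [← summable_nat_add_iff k, hshift]
    exact (inv_summable_shift hs (k + 1)).mul_left _
  have hfirst : ∑ i ∈ Finset.range k, w i ≤ r / 4 := by
    rw [Finset.sum_congr rfl fun i hi => hwlt i (Finset.mem_range.1 hi)]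
    rw [Finset.sum_const, Finset.card_range, nsmul_eq_mul]
    rcases Nat.eq_zero_or_pos k with h | h
    · rw [h]; simp; positivity
    · have : (0 : ℝ) < k := by exact_mod_cast h
      apply le_of_eq; field_simp
  have hsecond : ∑' i, w (i + k) ≤ r / 4 := by
    rw [hshift, tsum_mul_left]
    have h1 : tailSum ν (k + 1) ≤ t := by
      refine le_trans ?_ (tauSeq_gam_le hν hs ht)
      have : 0 ≤ ((k + 1 : ℕ) : ℝ) / ν (k + 1) := div_nonneg (Nat.cast_nonneg _) (hν.2.2.1 _).le
      unfold tauSeq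
      rw [← hk]
      linarith
    rw [inv_mul_le_iff₀ (by positivity)]
    calc _ ≤ t := h1
      _ = _ := by rw [ht_def]; ring
  have hle : ∑' i, w i ≤ r / 2 := by
    rw [← hsumw.sum_add_tsum_nat_add k]; linarith
  obtain ⟨Φ, hΦ, hb, h0, h1⟩ := exists_step hr hw hsumw hle
  have hit := iteratedDeriv_of_family hΦ
  have hhpos : 0 < hFun (sS ν) (L * r) := hFun_pos hν hs (by positivity)
  have hprod : ∀ j, (∏ i ∈ Finset.range j, 2 / w i) * hFun (sS ν) (L * r) ≤
      (32 * L) ^ j * prodSeq ν j := by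
    -- orders `j ≤ k` involve only the equal windows; later windows contribute exactly the
    -- factors `32 * L * ν_i`
    have hA : ∀ j ≤ k, (∏ i ∈ Finset.range j, 2 / w i) * hFun (sS ν) (L * r) ≤
        (32 * L) ^ j * prodSeq ν j := by
      intro j hj
      have e1 : ∏ i ∈ Finset.range j, 2 / w i = (8 * k / r) ^ j := by
        rw [Finset.prod_congr rfl fun i hi => by
          rw [hwlt i ((Finset.mem_range.1 hi).trans_le hj)], Finset.prod_const, Finset.card_range]
        congr 1
        field_simp
        ring
      -- since `L * r = t / 4`, the `k`-th term of the infimum gains `4 ^ (-k)` over `h(t)`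
      have h2 : hFun (sS ν) (L * r) ≤ (1 / 4) ^ k * (sS ν j * t ^ j) := by
        calc hFun (sS ν) (L * r) ≤ sS ν k * (L * r) ^ k := hFun_le hν hs (by positivity) k
          _ = (1 / 4) ^ k * (sS ν k * t ^ k) := by
            rw [show L * r = 1 / 4 * t by rw [ht_def]; ring, mul_pow (1 / 4 : ℝ) t k]; ring
          _ ≤ _ := mul_le_mul_of_nonneg_left (sS_mul_pow_anti hν hs ht hj le_rfl) (by positivity)
      have h3 : (k : ℝ) ^ j ≤ (Nat.factorial j : ℝ) * 4 ^ k := by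
        have h4 := Real.pow_div_factorial_le_exp (k : ℝ) k.cast_nonneg j
        rw [div_le_iff₀ (by positivity)] at h4
        have h5 : Real.exp k ≤ 4 ^ k := by
          rw [← Real.exp_one_pow]
          gcongr
          linarith [Real.exp_one_lt_d9]
        nlinarith [Nat.cast_nonneg (α := ℝ) (Nat.factorial j)]
      have hsp := (sS_pos hν hs j).le
      rw [e1]
      calc (8 * k / r) ^ j * hFun (sS ν) (L * r)
          ≤ (8 * k / r) ^ j * ((1 / 4) ^ k * (sS ν j * t ^ j)) := by gcongr
        _ = (k : ℝ) ^ j * ((8 / r) ^ j * (1 / 4) ^ k * (sS ν j * t ^ j)) := by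
            rw [show 8 * (k : ℝ) / r = k * (8 / r) by ring, mul_pow]; ring
        _ ≤ ((Nat.factorial j : ℝ) * 4 ^ k) * ((8 / r) ^ j * (1 / 4) ^ k * (sS ν j * t ^ j)) := by
            gcongr
        _ = (4 * (1 / 4)) ^ k * (8 / r * t) ^ j * ((Nat.factorial j : ℝ) * sS ν j) := by
            rw [mul_pow (4 : ℝ) (1 / 4) k, mul_pow (8 / r) t j]; ring
        _ = (32 * L) ^ j * ((Nat.factorial j : ℝ) * sS ν j) := by
            rw [show 8 / r * t = 32 * L by rw [ht_def]; field_simp; norm_num]; norm_num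
        _ ≤ _ := by gcongr; exact factorial_mul_sS_le hν hs j
    intro j
    rcases le_total j k with hj | hj
    · exact hA j hj
    · induction j, hj using Nat.le_induction with
      | base => exact hA k le_rfl
      | succ j hj ih =>
        have hn := hν.2.2.1 (j + 1)
        rw [Finset.prod_range_succ, hwge j hj, prodSeq_succ]
        calc _ = ((∏ i ∈ Finset.range j, 2 / w i) * hFun (sS ν) (L * r)) *
              (32 * L * ν (j + 1)) := by field_simp; ring
          _ ≤ (32 * L) ^ j * prodSeq ν j * (32 * L * ν (j + 1)) := by gcongr
          _ = _ := by ring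
  refine ⟨Φ 0, ?_, fun j x => ?_, h0, h1⟩
  · refine contDiff_of_differentiable_iteratedDeriv fun m _ => ?_
    rw [hit]
    exact fun x => (hΦ m x).differentiableAt
  · rw [norm_iteratedFDeriv_eq_norm_iteratedDeriv, hit, Real.norm_eq_abs, le_div_iff₀ hhpos]
    exact (mul_le_mul_of_nonneg_right (hb j x) hhpos.le).trans (hprod j)

/-! ### Derivatives on `ℝ^n` and families closed under differentiation -/

/-- Pointwise bounds of class `N` multiply, by the Leibniz rule and `N_i N_j ≤ N_{i+j}`. -/
lemma norm_iteratedFDeriv_mul_le' {V : Type*} [NormedAddCommGroup V] [NormedSpace ℝ V]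
    {N : ℕ → ℝ} (hN0 : ∀ k, 0 ≤ N k) (hN : ∀ i j, N i * N j ≤ N (i + j)) {f g : V → ℝ}
    (hf : ContDiff ℝ (⊤ : ℕ∞) f) (hg : ContDiff ℝ (⊤ : ℕ∞) g) {x : V} {a b A B : ℝ}
    (ha : 0 ≤ a) (hb : 0 ≤ b) (hA : 0 ≤ A) (hB : 0 ≤ B)
    (h1 : ∀ i, ‖iteratedFDeriv ℝ i f x‖ ≤ a * A ^ i * N i)
    (h2 : ∀ i, ‖iteratedFDeriv ℝ i g x‖ ≤ b * B ^ i * N i) (j : ℕ) :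
    ‖iteratedFDeriv ℝ j (fun y => f y * g y) x‖ ≤ a * b * (A + B) ^ j * N j := by
  refine (norm_iteratedFDeriv_mul_le (N := (⊤ : ℕ∞)) hf hg x (n := j)
    (by exact_mod_cast le_top)).trans ?_
  rw [add_pow, Finset.mul_sum, Finset.sum_mul]
  refine Finset.sum_le_sum fun i hi => ?_
  have hij : i + (j - i) = j := by have := Finset.mem_range.1 hi; omega
  have := hN i (j - i)
  rw [hij] at this
  calc _ ≤ (j.choose i : ℝ) * (a * A ^ i * N i) * (b * B ^ (j - i) * N (j - i)) := by
        gcongr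
        · have := hN0 i; positivity
        · exact h1 i
        · exact h2 _
    _ = (a * b * (A ^ i * B ^ (j - i) * (j.choose i : ℝ))) * (N i * N (j - i)) := by ring
    _ ≤ _ := by gcongr

lemma norm_iteratedFDeriv_prod_le' {V ι : Type*} [NormedAddCommGroup V] [NormedSpace ℝ V]
    {N : ℕ → ℝ} (hN0 : ∀ k, 0 ≤ N k) (hN : ∀ i j, N i * N j ≤ N (i + j)) (hN1 : N 0 = 1)
    {f : ι → V → ℝ} (s : Finset ι)
    (hf : ∀ i, ContDiff ℝ (⊤ : ℕ∞) (f i)) {x : V} {a A : ℝ}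
    (ha : 0 ≤ a) (hA : 0 ≤ A)
    (h1 : ∀ k i, ‖iteratedFDeriv ℝ i (f k) x‖ ≤ a * A ^ i * N i) (j : ℕ) :
    ‖iteratedFDeriv ℝ j (fun y => ∏ k ∈ s, f k y) x‖ ≤ a ^ s.card * (s.card * A) ^ j * N j := by
  classical
  induction s using Finset.induction_on generalizing j with
  | empty =>
    rcases j with _ | j
    · simp [hN1]
    · simp [iteratedFDeriv_const_of_ne]
  | insert k s hk ih =>
    have e : (fun y => ∏ k ∈ insert k s, f k y) = fun y => f k y * ∏ k ∈ s, f k y := by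
      funext y; rw [Finset.prod_insert hk]
    rw [e, Finset.card_insert_of_notMem hk]
    refine (norm_iteratedFDeriv_mul_le' hN0 hN (hf k) (contDiff_prod fun i _ => hf i) ha
      (pow_nonneg ha _) hA (by positivity) (h1 k) ih j).trans (le_of_eq ?_)
    push_cast
    ring

section
variable {n : ℕ}

lemma contDiff_pderivE {f : EuclideanSpace ℝ (Fin n) → ℝ} (hf : ContDiff ℝ (⊤ : ℕ∞) f)
    (i : Fin n) : ContDiff ℝ (⊤ : ℕ∞) (pderivE i f) :=
  (hf.fderiv_right (m := (⊤ : ℕ∞)) (by simp)).clm_apply contDiff_const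

lemma norm_iteratedFDeriv_pderivE_le {f : EuclideanSpace ℝ (Fin n) → ℝ}
    (hf : ContDiff ℝ (⊤ : ℕ∞) f) (i : Fin n) (j : ℕ) (x : EuclideanSpace ℝ (Fin n)) :
    ‖iteratedFDeriv ℝ j (pderivE i f) x‖ ≤ ‖iteratedFDeriv ℝ (j + 1) f x‖ := by
  have h1 : ContDiff ℝ (⊤ : ℕ∞) (fderiv ℝ f) := hf.fderiv_right (m := (⊤ : ℕ∞)) (by simp)
  let Λ : (EuclideanSpace ℝ (Fin n) →L[ℝ] ℝ) →L[ℝ] ℝ :=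
    ContinuousLinearMap.apply ℝ ℝ (EuclideanSpace.single i (1 : ℝ))
  have hΛ : ‖Λ‖ ≤ 1 := by
    refine ContinuousLinearMap.opNorm_le_bound _ zero_le_one fun φ => ?_
    have := φ.le_opNorm (EuclideanSpace.single i (1 : ℝ))
    simpa [Λ] using this
  have := Λ.norm_iteratedFDeriv_comp_left (f := fderiv ℝ f) (x := x) (N := (⊤ : ℕ∞)) (n := j)
    h1.contDiffAt (by exact_mod_cast le_top)
  rw [norm_iteratedFDeriv_fderiv] at this
  calc _ = ‖iteratedFDeriv ℝ j (Λ ∘ fderiv ℝ f) x‖ := rfl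
    _ ≤ _ := this
    _ ≤ 1 * ‖iteratedFDeriv ℝ (j + 1) f x‖ := by gcongr
    _ = _ := one_mul _

lemma pderivE_iterate {f : EuclideanSpace ℝ (Fin n) → ℝ}
    (hf : ContDiff ℝ (⊤ : ℕ∞) f) (i : Fin n) (k : ℕ) :
    ContDiff ℝ (⊤ : ℕ∞) ((pderivE i)^[k] f) ∧ ∀ j x,
    ‖iteratedFDeriv ℝ j ((pderivE i)^[k] f) x‖ ≤ ‖iteratedFDeriv ℝ (j + k) f x‖ := by
  induction k with
  | zero => exact ⟨hf, fun j x => le_rfl⟩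
  | succ k ih =>
    rw [Function.iterate_succ_apply']
    refine ⟨contDiff_pderivE ih.1 i, fun j x => ?_⟩
    refine (norm_iteratedFDeriv_pderivE_le ih.1 i j x).trans ((ih.2 _ x).trans (le_of_eq ?_))
    rw [add_right_comm, add_assoc]

lemma pderivE_sub {f g : EuclideanSpace ℝ (Fin n) → ℝ}
    (hf : ContDiff ℝ (⊤ : ℕ∞) f) (hg : ContDiff ℝ (⊤ : ℕ∞) g) (i : Fin n) :
    pderivE i (f - g) = pderivE i f - pderivE i g := by
  funext x
  have h1 : DifferentiableAt ℝ f x := (hf.differentiable (by simp)).differentiableAt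
  have h2 : DifferentiableAt ℝ g x := (hg.differentiable (by simp)).differentiableAt
  simp [pderivE, fderiv_sub h1 h2]

lemma pderivE_iterate_sub {f g : EuclideanSpace ℝ (Fin n) → ℝ}
    (hf : ContDiff ℝ (⊤ : ℕ∞) f) (hg : ContDiff ℝ (⊤ : ℕ∞) g) (i : Fin n) (k : ℕ) :
    (pderivE i)^[k] (f - g) = (pderivE i)^[k] f - (pderivE i)^[k] g := by
  induction k with
  | zero => rfl
  | succ k ih =>
    simp only [Function.iterate_succ_apply']
    rw [ih, pderivE_sub (pderivE_iterate hf i k).1 (pderivE_iterate hg i k).1]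

lemma foldr_pderiv (l : List (Fin n)) (β : Fin n → ℕ) {f : EuclideanSpace ℝ (Fin n) → ℝ}
    (hf : ContDiff ℝ (⊤ : ℕ∞) f) :
    ContDiff ℝ (⊤ : ℕ∞) (l.foldr (fun i g => (pderivE i)^[β i] g) f) ∧ ∀ j x,
    ‖iteratedFDeriv ℝ j (l.foldr (fun i g => (pderivE i)^[β i] g) f) x‖
      ≤ ‖iteratedFDeriv ℝ (j + (l.map β).sum) f x‖ := by
  induction l with
  | nil => exact ⟨hf, fun j x => le_rfl⟩
  | cons i l ih =>
    rw [List.foldr_cons, List.map_cons, List.sum_cons]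
    have := pderivE_iterate ih.1 i (β i)
    refine ⟨this.1, fun j x => (this.2 j x).trans ((ih.2 _ x).trans (le_of_eq ?_))⟩
    rw [add_assoc]

/-- A partial derivative is the value of the full derivative on unit vectors. -/
lemma abs_pderivMulti_le {f : EuclideanSpace ℝ (Fin n) → ℝ} (hf : ContDiff ℝ (⊤ : ℕ∞) f)
    (α : Fin n → ℕ) (x : EuclideanSpace ℝ (Fin n)) :
    |pderivMulti α f x| ≤ ‖iteratedFDeriv ℝ (∑ i, α i) f x‖ := by
  have := (foldr_pderiv (List.finRange n) α hf).2 0 x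
  rwa [norm_iteratedFDeriv_zero, zero_add, ← Fin.sum_univ_def] at this

lemma pderivMulti_sub {f g : EuclideanSpace ℝ (Fin n) → ℝ}
    (hf : ContDiff ℝ (⊤ : ℕ∞) f) (hg : ContDiff ℝ (⊤ : ℕ∞) g) (α : Fin n → ℕ) :
    pderivMulti α (f - g) = pderivMulti α f - pderivMulti α g := by
  unfold pderivMulti
  induction List.finRange n with
  | nil => rfl
  | cons i l ih =>
    rw [List.foldr_cons, ih, pderivE_iterate_sub (foldr_pderiv l α hf).1 (foldr_pderiv l α hg).1]
    rfl

/-- A family `(u_β)` of functions indexed by multi-indices that is closed under partial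
differentiation: `∂_i u_β = u_{β + e_i}`, so that `u_β = ∂^β u_0`. -/
def IsFam (u : (Fin n → ℕ) → EuclideanSpace ℝ (Fin n) → ℝ) : Prop :=
  ∀ β x, HasFDerivAt (u β)
    (∑ i, u (β + Pi.single i 1) x • (EuclideanSpace.proj i : EuclideanSpace ℝ (Fin n) →L[ℝ] ℝ)) x

lemma norm_euclid_proj_le (i : Fin n) :
    ‖(EuclideanSpace.proj i : EuclideanSpace ℝ (Fin n) →L[ℝ] ℝ)‖ ≤ 1 :=
  ContinuousLinearMap.opNorm_le_bound _ zero_le_one fun x => by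
    simpa using PiLp.norm_apply_le x i

lemma IsFam.contDiff {u : (Fin n → ℕ) → EuclideanSpace ℝ (Fin n) → ℝ} (hu : IsFam u)
    (β : Fin n → ℕ) : ContDiff ℝ (⊤ : ℕ∞) (u β) := by
  rw [contDiff_infty]
  intro m
  induction m generalizing β with
  | zero =>
    rw [Nat.cast_zero, contDiff_zero]
    exact continuous_iff_continuousAt.2 fun x => (hu β x).continuousAt
  | succ m ih =>
    push_cast
    rw [contDiff_succ_iff_hasFDerivAt]
    exact ⟨_, ContDiff.sum fun i _ => (ih (β + Pi.single i 1)).smul contDiff_const, hu β⟩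

lemma IsFam.fderiv_eq {u : (Fin n → ℕ) → EuclideanSpace ℝ (Fin n) → ℝ} (hu : IsFam u)
    (β : Fin n → ℕ) : fderiv ℝ (u β) = fun x => ∑ i, u (β + Pi.single i 1) x •
      (EuclideanSpace.proj i : EuclideanSpace ℝ (Fin n) →L[ℝ] ℝ) :=
  funext fun x => (hu β x).fderiv

/-- Bounds for the members of a family bound the full derivatives; the factor `(n + 1) ^ j` comes
from counting the coordinate directions. -/
lemma IsFam.norm_iteratedFDeriv_le {u : (Fin n → ℕ) → EuclideanSpace ℝ (Fin n) → ℝ}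
    (hu : IsFam u) {x : EuclideanSpace ℝ (Fin n)} {K : ℝ} (hK : 0 ≤ K) (j : ℕ)
    (β : Fin n → ℕ) (h : ∀ γ : Fin n → ℕ, ∑ i, γ i = j → |u (β + γ) x| ≤ K) :
    ‖iteratedFDeriv ℝ j (u β) x‖ ≤ ((n : ℝ) + 1) ^ j * K := by
  induction j generalizing β with
  | zero => simpa using h 0 (by simp)
  | succ j ih =>
    rw [← norm_iteratedFDeriv_fderiv, hu.fderiv_eq]
    have hle : ∀ i : Fin n, ‖iteratedFDeriv ℝ j (fun x => u (β + Pi.single i 1) x •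
        (EuclideanSpace.proj i : EuclideanSpace ℝ (Fin n) →L[ℝ] ℝ)) x‖
        ≤ ((n : ℝ) + 1) ^ j * K := by
      intro i
      let Λ : ℝ →L[ℝ] (EuclideanSpace ℝ (Fin n) →L[ℝ] ℝ) :=
        ContinuousLinearMap.toSpanSingleton ℝ (EuclideanSpace.proj i)
      have h1 := Λ.norm_iteratedFDeriv_comp_left (f := u (β + Pi.single i 1)) (x := x)
        (N := (⊤ : ℕ∞)) (n := j) (hu.contDiff _).contDiffAt (by exact_mod_cast le_top)
      have h2 : ‖Λ‖ ≤ 1 := by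
        simpa [Λ, ContinuousLinearMap.norm_toSpanSingleton] using norm_euclid_proj_le i
      calc _ = ‖iteratedFDeriv ℝ j (Λ ∘ u (β + Pi.single i 1)) x‖ := rfl
        _ ≤ _ := h1
        _ ≤ 1 * ‖iteratedFDeriv ℝ j (u (β + Pi.single i 1)) x‖ := by gcongr
        _ ≤ _ := by
          rw [one_mul]
          refine ih _ fun γ hγ => ?_
          rw [add_assoc]
          refine h _ ?_
          simp [Finset.sum_add_distrib, hγ, add_comm]
    have hsm : ∀ i ∈ (Finset.univ : Finset (Fin n)), ContDiffAt ℝ j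
        (fun x => u (β + Pi.single i 1) x •
          (EuclideanSpace.proj i : EuclideanSpace ℝ (Fin n) →L[ℝ] ℝ)) x := fun i _ =>
      (((hu.contDiff _).smul contDiff_const).contDiffAt.of_le (by exact_mod_cast le_top))
    rw [iteratedFDeriv_fun_sum_apply hsm]
    refine (norm_sum_le _ _).trans ((Finset.sum_le_sum fun i _ => hle i).trans ?_)
    rw [Finset.sum_const, Finset.card_univ, Fintype.card_fin, nsmul_eq_mul, pow_succ]
    nlinarith [show 0 ≤ ((n : ℝ) + 1) ^ j * K by positivity]

lemma IsFam.pderivE_eq {u : (Fin n → ℕ) → EuclideanSpace ℝ (Fin n) → ℝ} (hu : IsFam u)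
    (β : Fin n → ℕ) (i : Fin n) : pderivE i (u β) = u (β + Pi.single i 1) := by
  funext x
  rw [pderivE, hu.fderiv_eq]
  simp

lemma IsFam.pderivMulti_eq {u : (Fin n → ℕ) → EuclideanSpace ℝ (Fin n) → ℝ} (hu : IsFam u)
    (α : Fin n → ℕ) : pderivMulti α (u 0) = u α := by
  have h1 : ∀ (i : Fin n) (k : ℕ) β, (pderivE i)^[k] (u β) = u (β + Pi.single i k) := by
    intro i k
    induction k with
    | zero => simp
    | succ k ih =>
      intro β
      rw [Function.iterate_succ_apply', ih, hu.pderivE_eq, add_assoc, ← Pi.single_add]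
  have h2 : ∀ l : List (Fin n), l.foldr (fun i g => (pderivE i)^[α i] g) (u 0)
      = u ((l.map fun i => Pi.single i (α i)).sum) := by
    intro l
    induction l with
    | nil => rfl
    | cons i l ih => rw [List.foldr_cons, ih, h1, List.map_cons, List.sum_cons, add_comm]
  unfold pderivMulti
  rw [h2, ← Fin.sum_univ_def]
  congr 1
  exact Finset.univ_sum_single α

end

/-! ### Taylor polynomials of jets -/

section
variable {n : ℕ}

/-- The homogeneous part `∑_{|α| = m} y^α G(β+α)/α!` of degree `m` of the Taylor polynomial
with coefficients `G`, defined recursively through Euler's relation. -/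
noncomputable def HP (G : (Fin n → ℕ) → ℝ) (y : Fin n → ℝ) : ℕ → (Fin n → ℕ) → ℝ
  | 0, β => G β
  | (m + 1), β => (1 / ((m : ℝ) + 1)) * ∑ i, y i * HP G y m (β + Pi.single i 1)

/-- The homogeneous parts are closed under differentiation: `∂_i` lowers the degree `m + 1` to `m`
and shifts the coefficients by `e_i`. -/
lemma hasFDerivAt_HP (G : (Fin n → ℕ) → ℝ) (a : EuclideanSpace ℝ (Fin n)) (m : ℕ)
    (β : Fin n → ℕ) (x : EuclideanSpace ℝ (Fin n)) :
    HasFDerivAt (fun x : EuclideanSpace ℝ (Fin n) => HP G (fun i => x i - a i) (m + 1) β)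
      (∑ i, HP G (fun i => x i - a i) m (β + Pi.single i 1) •
        (EuclideanSpace.proj i : EuclideanSpace ℝ (Fin n) →L[ℝ] ℝ)) x := by
  have hc : ∀ i, HasFDerivAt (fun x : EuclideanSpace ℝ (Fin n) => x i - a i)
      (EuclideanSpace.proj i : EuclideanSpace ℝ (Fin n) →L[ℝ] ℝ) x := fun i =>
    ((EuclideanSpace.proj i : EuclideanSpace ℝ (Fin n) →L[ℝ] ℝ).hasFDerivAt).sub_const _
  induction m generalizing β with
  | zero =>
    have h1 := HasFDerivAt.fun_sum (u := Finset.univ) fun i _ =>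
      (hc i).mul_const (G (β + Pi.single i 1))
    simpa [HP] using h1
  | succ m ih =>
    have h1 := (HasFDerivAt.fun_sum (u := Finset.univ) fun i _ =>
      (hc i).mul (ih (β + Pi.single i 1))).const_mul (1 / (((m + 1 : ℕ) : ℝ) + 1))
    refine h1.congr_fderiv ?_
    ext v
    have hm : ((m : ℝ) + 1) ≠ 0 := by positivity
    have hm2 : ((m : ℝ) + 1 + 1) ≠ 0 := by positivity
    have key : ∑ i, (x i - a i) * ∑ k, HP G (fun i => x i - a i) m
        (β + Pi.single i 1 + Pi.single k 1) * v k
        = ((m : ℝ) + 1) * ∑ k, HP G (fun i => x i - a i) (m + 1) (β + Pi.single k 1) * v k := by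
      simp only [Finset.mul_sum, HP, Finset.sum_mul]
      rw [Finset.sum_comm]
      refine Finset.sum_congr rfl fun k _ => Finset.sum_congr rfl fun i _ => ?_
      rw [add_right_comm]
      field_simp
    simp only [_root_.smul_apply, _root_.sum_apply,
      _root_.add_apply, smul_eq_mul, Finset.sum_add_distrib,
      EuclideanSpace.proj, PiLp.proj_apply]
    rw [key]
    push_cast
    field_simp

lemma abs_HP_le {G : (Fin n → ℕ) → ℝ} {y : Fin n → ℝ} {R K : ℝ}
    (hy : ∀ i, |y i| ≤ R) (hR : 0 ≤ R) (m : ℕ) (β : Fin n → ℕ)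
    (h : ∀ γ : Fin n → ℕ, ∑ i, γ i = m → |G (β + γ)| ≤ K) :
    |HP G y m β| ≤ (n * R) ^ m / (Nat.factorial m : ℝ) * K := by
  induction m generalizing β with
  | zero => simpa [HP] using h 0 (by simp)
  | succ m ih =>
    have h1 : ∀ i, |y i * HP G y m (β + Pi.single i 1)|
        ≤ R * ((n * R) ^ m / (Nat.factorial m : ℝ) * K) := fun i => by
      rw [abs_mul]
      gcongr
      · exact hy i
      · refine ih _ fun γ hγ => ?_
        rw [add_assoc]
        refine h _ ?_
        simp [Finset.sum_add_distrib, hγ, add_comm]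
    rw [HP, abs_mul, abs_of_pos (by positivity : (0 : ℝ) < 1 / ((m : ℝ) + 1))]
    have h2 : |∑ i, y i * HP G y m (β + Pi.single i 1)|
        ≤ n * (R * ((n * R) ^ m / (Nat.factorial m : ℝ) * K)) := by
      refine (Finset.abs_sum_le_sum_abs _ _).trans ((Finset.sum_le_sum fun i _ => h1 i).trans ?_)
      simp
    calc _ ≤ 1 / ((m : ℝ) + 1) * (n * (R * ((n * R) ^ m / (Nat.factorial m : ℝ) * K))) := by
          gcongr
      _ = _ := by
          rw [Nat.factorial_succ]; push_cast; field_simp; ring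

lemma HP_sub (G G' : (Fin n → ℕ) → ℝ) (y : Fin n → ℝ) (m : ℕ) (β : Fin n → ℕ) :
    HP (G - G') y m β = HP G y m β - HP G' y m β := by
  induction m generalizing β with
  | zero => rfl
  | succ m ih => simp only [HP, ih, mul_sub, Finset.sum_sub_distrib]

lemma HP_zero_right (G : (Fin n → ℕ) → ℝ) (m : ℕ) (β : Fin n → ℕ) :
    HP G 0 (m + 1) β = 0 := by simp [HP]

/-- The monomial `y^α/α!`. -/
noncomputable def mon (y : Fin n → ℝ) (α : Fin n → ℕ) : ℝ :=
  ∏ i, y i ^ α i / (Nat.factorial (α i) : ℝ)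

lemma mon_add_single (y : Fin n → ℝ) (α : Fin n → ℕ) (i : Fin n) :
    ((α i : ℝ) + 1) * mon y (α + Pi.single i 1) = y i * mon y α := by
  unfold mon
  rw [← Finset.mul_prod_erase _ _ (Finset.mem_univ i),
    ← Finset.mul_prod_erase _ (fun k => y k ^ α k / (Nat.factorial (α k) : ℝ))
      (Finset.mem_univ i)]
  have : ∏ k ∈ Finset.univ.erase i, y k ^ (α + Pi.single i 1 : Fin n → ℕ) k /
      (Nat.factorial ((α + Pi.single i 1 : Fin n → ℕ) k) : ℝ)
      = ∏ k ∈ Finset.univ.erase i, y k ^ α k / (Nat.factorial (α k) : ℝ) :=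
    Finset.prod_congr rfl fun k hk => by
      simp [Finset.ne_of_mem_erase hk]
  rw [this]
  simp only [Pi.add_apply, Pi.single_eq_same, Nat.factorial_succ]
  push_cast
  field_simp
  ring

/-- The recursive definition of the homogeneous part agrees with the sum over multi-indices. -/
lemma HP_eq_sum (G : (Fin n → ℕ) → ℝ) (y : Fin n → ℝ) (m : ℕ) (β : Fin n → ℕ) :
    HP G y m β = ∑ α ∈ Finset.piAntidiag Finset.univ m, mon y α * G (β + α) := by
  induction m generalizing β with
  | zero => simp [HP, mon]
  | succ m ih =>
    have hm : ((m : ℝ) + 1) ≠ 0 := by positivity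
    have h1 : ∀ i, ∑ α ∈ Finset.piAntidiag Finset.univ (m + 1), (α i : ℝ) * (mon y α * G (β + α))
        = y i * HP G y m (β + Pi.single i 1) := by
      intro i
      rw [ih, Finset.mul_sum]
      symm
      refine Finset.sum_of_injOn (fun α => α + Pi.single i 1)
        (fun α _ α' _ h => add_right_cancel h) ?_ ?_ ?_
      · intro α hα
        simp only [Finset.mem_coe, Finset.mem_piAntidiag, Finset.mem_univ, implies_true,
          and_true] at hα ⊢
        simp [Finset.sum_add_distrib, hα]
      · intro α hα hn
        have : α i = 0 := by
          by_contra h0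
          refine hn ⟨α - Pi.single i 1, ?_, ?_⟩
          · simp only [Finset.mem_coe, Finset.mem_piAntidiag, Finset.mem_univ, implies_true,
              and_true] at hα ⊢
            have hle : ∀ k ∈ Finset.univ, (Pi.single i 1 : Fin n → ℕ) k ≤ α k := by
              intro k _
              rcases eq_or_ne k i with rfl | hk
              · simp; omega
              · simp [hk]
            have := Finset.sum_tsub_distrib (Finset.univ) (f := α) (g := Pi.single i 1) hle
            simp only [Pi.sub_apply]
            rw [this, hα]; simp
          · funext k
            rcases eq_or_ne k i with rfl | hk
            · simp; omega
            · simp [hk]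
        simp [this]
      · intro α _
        have := mon_add_single y α i
        simp only [Pi.add_apply, Pi.single_eq_same]
        push_cast
        rw [← mul_assoc, ← mul_assoc, this, add_assoc, add_comm (Pi.single i 1) α]
    rw [HP, ← Finset.sum_congr rfl fun i _ => h1 i, Finset.sum_comm, one_div, inv_mul_eq_iff_eq_mul₀ hm,
      Finset.mul_sum]
    refine Finset.sum_congr rfl fun α hα => ?_
    rw [← Finset.sum_mul, ← Nat.cast_sum]
    simp only [Finset.mem_piAntidiag, Finset.mem_univ, implies_true, and_true] at hα
    rw [hα]
    push_cast; rfl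

/-- A sum over `|α| ≤ p` split by the value of `|α|`. -/
lemma sum_midx (p : ℕ) (f : (Fin n → ℕ) → ℝ) :
    ∑ α ∈ midx n p, f α = ∑ m ∈ Finset.range (p + 1),
      ∑ α ∈ Finset.piAntidiag Finset.univ m, f α := by
  rw [← Finset.sum_fiberwise_of_maps_to (g := fun α : Fin n → ℕ => ∑ i, α i)
    (t := Finset.range (p + 1))]
  · refine Finset.sum_congr rfl fun m hm => Finset.sum_congr ?_ fun _ _ => rfl
    ext α
    have hm := Finset.mem_range.1 hm
    simp only [midx, Finset.mem_filter, Fintype.mem_piFinset, Finset.mem_range,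
      Finset.mem_piAntidiag, Finset.mem_univ, implies_true, and_true]
    constructor
    · exact fun h => h.2
    · intro h
      have h' : ∑ i, α i = m := h
      refine ⟨⟨fun i => ?_, by omega⟩, h⟩
      have := Finset.single_le_sum (f := α) (fun _ _ => Nat.zero_le _) (Finset.mem_univ i)
      omega
  · intro α hα
    have := (Finset.mem_filter.1 hα).2
    simp only [Finset.mem_range]; omega

/-- The derivative `∂^β` of the Taylor polynomial of degree `< q` with coefficients `G`,
as a function of the increment `y`. -/
noncomputable def TT (q : ℕ) (G : (Fin n → ℕ) → ℝ) (y : Fin n → ℝ) (β : Fin n → ℕ) : ℝ :=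
  ∑ m ∈ Finset.range (q - ∑ i, β i), HP G y m β

lemma TT_of_le {q : ℕ} (G : (Fin n → ℕ) → ℝ) (y : Fin n → ℝ) {β : Fin n → ℕ}
    (h : q ≤ ∑ i, β i) : TT q G y β = 0 := by
  simp [TT, Nat.sub_eq_zero_of_le h]

lemma TT_zero_right {q : ℕ} (G : (Fin n → ℕ) → ℝ) {β : Fin n → ℕ}
    (h : ∑ i, β i < q) : TT q G 0 β = G β := by
  obtain ⟨k, hk⟩ : ∃ k, q - ∑ i, β i = k + 1 := ⟨q - ∑ i, β i - 1, by omega⟩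
  rw [TT, hk, Finset.sum_range_succ']
  simp [HP]

lemma TT_sub (q : ℕ) (G G' : (Fin n → ℕ) → ℝ) (y : Fin n → ℝ) (β : Fin n → ℕ) :
    TT q (G - G') y β = TT q G y β - TT q G' y β := by
  simp [TT, HP_sub]

lemma sum_add_single (β : Fin n → ℕ) (i : Fin n) :
    ∑ k, (β + Pi.single i 1 : Fin n → ℕ) k = ∑ k, β k + 1 := by
  simp [Finset.sum_add_distrib]

lemma isFam_TT (q : ℕ) (G : (Fin n → ℕ) → ℝ) (a : EuclideanSpace ℝ (Fin n)) :
    IsFam fun β x => TT q G (fun i => x i - a i) β := by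
  intro β x
  simp only [TT, sum_add_single]
  rcases h : q - ∑ i, β i with _ | k
  · have h2 : q - (∑ i, β i + 1) = 0 := by omega
    simp only [h2, Finset.range_zero, Finset.sum_empty, zero_smul, Finset.sum_const_zero]
    exact hasFDerivAt_const _ _
  · have h2 : q - (∑ i, β i + 1) = k := by omega
    simp only [h2, Finset.sum_range_succ']
    have h3 := HasFDerivAt.fun_sum (u := Finset.range k) fun m _ => hasFDerivAt_HP G a m β x
    have h4 := h3.add_const (G β)
    refine h4.congr_fderiv ?_
    rw [Finset.sum_comm]
    simp only [Finset.sum_smul]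

lemma IsFam.sub {u v : (Fin n → ℕ) → EuclideanSpace ℝ (Fin n) → ℝ} (hu : IsFam u)
    (hv : IsFam v) : IsFam fun β x => u β x - v β x := by
  intro β x
  refine ((hu β x).sub (hv β x)).congr_fderiv ?_
  simp only [sub_smul, Finset.sum_sub_distrib]

/-- A family vanishing in high order is determined by its values at one point. -/
lemma IsFam.ext_point {u v : (Fin n → ℕ) → EuclideanSpace ℝ (Fin n) → ℝ} (hu : IsFam u)
    (hv : IsFam v) {q : ℕ} (b : EuclideanSpace ℝ (Fin n))
    (h0 : ∀ β : Fin n → ℕ, q ≤ ∑ i, β i → u β = v β) (hb : ∀ β, u β b = v β b)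
    (β : Fin n → ℕ) : u β = v β := by
  have key : ∀ k : ℕ, ∀ β : Fin n → ℕ, q ≤ ∑ i, β i + k → u β = v β := by
    intro k
    induction k with
    | zero => exact fun β h => h0 β h
    | succ k ih =>
      intro β h
      have hd : ∀ x, HasFDerivAt (fun x => u β x - v β x)
          (0 : EuclideanSpace ℝ (Fin n) →L[ℝ] ℝ) x := fun x => by
        refine ((hu.sub hv) β x).congr_fderiv ?_
        refine Finset.sum_eq_zero fun i _ => ?_
        show (u (β + Pi.single i 1) x - v (β + Pi.single i 1) x) • _ = _
        rw [ih (β + Pi.single i 1) (by rw [sum_add_single]; omega), sub_self, zero_smul]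
      funext x
      have := is_const_of_fderiv_eq_zero (𝕜 := ℝ) (f := fun x => u β x - v β x)
        (fun x => (hd x).differentiableAt) (fun x => (hd x).fderiv) x b
      simp only [hb β, sub_self] at this
      linarith
  exact key q β (by omega)

/-- A Taylor polynomial at `a` equals its own Taylor polynomial at `b`. -/
lemma TT_rebase (q : ℕ) (G : (Fin n → ℕ) → ℝ) (a b x : EuclideanSpace ℝ (Fin n))
    (β : Fin n → ℕ) :
    TT q G (fun i => x i - a i) β
      = TT q (fun α => TT q G (fun i => b i - a i) α) (fun i => x i - b i) β := by
  have := (isFam_TT q G a).ext_point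
    (isFam_TT q (fun α => TT q G (fun i => b i - a i) α) b) (q := q) b ?_ ?_ β
  · exact congrFun this x
  · intro β hβ; funext x; rw [TT_of_le _ _ hβ, TT_of_le _ _ hβ]
  · intro β
    rcases lt_or_ge (∑ i, β i) q with h | h
    · have e : (fun i => b i - b i) = (0 : Fin n → ℝ) := by funext i; simp
      simp only [e]
      rw [TT_zero_right _ h]
    · rw [TT_of_le _ _ h, TT_of_le _ _ h]

/-- The Whitney remainder expressed through `TT`: degree `≤ q - 1` means degree `< q`. -/
lemma Rrem_eq (F : (Fin n → ℕ) → EuclideanSpace ℝ (Fin n) → ℝ)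
    (a b : EuclideanSpace ℝ (Fin n)) {q : ℕ} {α : Fin n → ℕ} (h : ∑ i, α i < q) :
    F α b - TT q (fun γ => F γ a) (fun i => b i - a i) α = Rrem F a (q - 1) α b := by
  unfold Rrem TT
  rw [sum_midx, show q - 1 - ∑ i, α i + 1 = q - ∑ i, α i by omega]
  simp only [HP_eq_sum, mon]

lemma abs_TT_le {q : ℕ} {G : (Fin n → ℕ) → ℝ} {y : Fin n → ℝ} {R : ℝ} {K : ℕ → ℝ}
    (hy : ∀ i, |y i| ≤ R) (hR : 0 ≤ R) (β : Fin n → ℕ)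
    (h : ∀ γ : Fin n → ℕ, ∑ i, γ i < q → |G γ| ≤ K (∑ i, γ i)) :
    |TT q G y β| ≤ ∑ m ∈ Finset.range (q - ∑ i, β i),
      (n * R) ^ m / (Nat.factorial m : ℝ) * K (∑ i, β i + m) := by
  refine (Finset.abs_sum_le_sum_abs _ _).trans (Finset.sum_le_sum fun m hm => ?_)
  have hm := Finset.mem_range.1 hm
  refine abs_HP_le hy hR m β fun γ hγ => ?_
  have : ∑ i, (β + γ) i = ∑ i, β i + m := by simp [Finset.sum_add_distrib, hγ]
  rw [← this]
  exact h _ (by omega)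

end

/-! ### Comparison of Taylor polynomials -/

section
variable {n : ℕ}

lemma factorial_add_le (m j : ℕ) : (Nat.factorial (m + j) : ℝ) ≤
    2 ^ (m + j) * (Nat.factorial m : ℝ) * (Nat.factorial j : ℝ) := by
  have h1 := Nat.add_choose_mul_factorial_mul_factorial m j
  have h2 := Nat.choose_le_two_pow (m + j) j
  rw [← h1]
  push_cast
  gcongr
  exact_mod_cast h2

/-- A term of a Taylor sum in terms of `s` instead of `M`. The inequality
`(m + j)! ≤ 2 ^ (m + j) m! j!` separates the factorial `j!` of the derivative from the `m!` of the
Taylor formula. -/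
lemma taylor_term_le {M s : ℕ → ℝ} {C ρ D R : ℝ} (hC : 0 ≤ C) (hρ : 0 ≤ ρ) (hD : 0 ≤ D)
    (hR : 0 < R) (hs : ∀ k, 0 ≤ s k)
    (hM : ∀ k, M k ≤ D ^ k * (Nat.factorial k : ℝ) * s k) {c : ℝ} (hc : 1 ≤ c) (m j : ℕ) :
    (c * R) ^ m / (Nat.factorial m : ℝ) * (C * ρ ^ (m + j) * M (m + j)) ≤
      C * (Nat.factorial j : ℝ) * R⁻¹ ^ j * ((2 * ρ * D * c * R) ^ (m + j) * s (m + j)) := by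
  have h1 := (hM (m + j)).trans (mul_le_mul_of_nonneg_right
    (mul_le_mul_of_nonneg_left (factorial_add_le m j) (by positivity)) (hs _))
  have hsl := hs (m + j)
  calc _ ≤ (c * R) ^ m / (Nat.factorial m : ℝ) * (C * ρ ^ (m + j) * (D ^ (m + j) *
        (2 ^ (m + j) * (Nat.factorial m : ℝ) * (Nat.factorial j : ℝ)) * s (m + j))) := by gcongr
    _ = C * (Nat.factorial j : ℝ) * R ^ m * ((2 * ρ * D) ^ (m + j) * s (m + j)) * c ^ m := by
        field_simp
        ring
    _ ≤ C * (Nat.factorial j : ℝ) * R ^ m * ((2 * ρ * D) ^ (m + j) * s (m + j)) * c ^ (m + j) := by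
        gcongr
        omega
    _ = _ := by
        have : R ^ m = R⁻¹ ^ j * R ^ (m + j) := by
          rw [inv_pow, pow_add]; field_simp
        rw [this]; ring

/-- A partial sum of the binomial expansion of `(nR + 2R) ^ k`, divided by `k!`. -/
lemma sum_exp_le (n k : ℕ) (R : ℝ) (hR : 0 ≤ R) :
    ∑ m ∈ Finset.range k, ((n : ℝ) * R) ^ m / (Nat.factorial m : ℝ) *
      ((2 * R) ^ (k - m) / (Nat.factorial (k - m) : ℝ))
      ≤ (((n : ℝ) + 2) * R) ^ k / (Nat.factorial k : ℝ) := by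
  rw [add_mul, add_pow, Finset.sum_div]
  refine (Finset.sum_le_sum_of_subset_of_nonneg (Finset.range_subset_range.2 k.le_succ)
    fun _ _ _ => by positivity).trans (Finset.sum_le_sum fun m hm => le_of_eq ?_)
  rw [Nat.cast_choose ℝ (by have := Finset.mem_range.1 hm; omega : m ≤ k)]
  field_simp

/-- Comparison of Taylor polynomials of different degrees at different points of `E`, on a
set at distance at most `R` from both points. -/
lemma abs_TT_sub_le {F : (Fin n → ℕ) → EuclideanSpace ℝ (Fin n) → ℝ}
    {E : Set (EuclideanSpace ℝ (Fin n))} {M s : ℕ → ℝ} {C ρ D R : ℝ} (hC : 0 ≤ C)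
    (hρ : 0 ≤ ρ) (hD : 0 ≤ D) (hR : 0 < R) (hs : ∀ k, 0 ≤ s k) (hM0 : ∀ k, 0 ≤ M k)
    (hM : ∀ k, M k ≤ D ^ k * (Nat.factorial k : ℝ) * s k)
    (h1 : ∀ α : Fin n → ℕ, ∀ a ∈ E, |F α a| ≤ C * ρ ^ (∑ i, α i) * M (∑ i, α i))
    (h2 : ∀ p : ℕ, ∀ α : Fin n → ℕ, ∑ i, α i ≤ p → ∀ a ∈ E, ∀ b ∈ E,
      |Rrem F a p α b| ≤ C * ρ ^ (p + 1) * M (p + 1) *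
        ‖b - a‖ ^ (p + 1 - ∑ i, α i) / (Nat.factorial (p + 1 - ∑ i, α i) : ℝ))
    {a b x : EuclideanSpace ℝ (Fin n)} (ha : a ∈ E) (hb : b ∈ E)
    (hxa : ∀ i, |x i - a i| ≤ R) (hxb : ∀ i, |x i - b i| ≤ R) (hab : ‖b - a‖ ≤ 2 * R)
    {q q' : ℕ} (hq : q ≤ q') (β : Fin n → ℕ) :
    |TT q' (fun γ => F γ a) (fun i => x i - a i) β - TT q (fun γ => F γ b) (fun i => x i - b i) β|
      ≤ C * (Nat.factorial (∑ i, β i) : ℝ) * R⁻¹ ^ (∑ i, β i) *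
        (∑ l ∈ Finset.Ico q q', (2 * ρ * D * (n + 2) * R) ^ l * s l
          + (2 * ρ * D * (n + 2) * R) ^ q * s q) := by
  have hc : (1 : ℝ) ≤ n + 2 := by have := n.cast_nonneg (α := ℝ); linarith
  set j := ∑ i, β i with hj
  -- change of the degree at the fixed point `a`: the difference consists of the terms of
  -- order `l` with `q ≤ l < q'`
  have hA : |TT q' (fun γ => F γ a) (fun i => x i - a i) β
      - TT q (fun γ => F γ a) (fun i => x i - a i) β|
      ≤ C * (Nat.factorial j : ℝ) * R⁻¹ ^ j *
        ∑ l ∈ Finset.Ico q q', (2 * ρ * D * (n + 2) * R) ^ l * s l := by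
    rw [TT, TT, ← Finset.sum_Ico_eq_sub _ (Nat.sub_le_sub_right hq _)]
    refine (Finset.abs_sum_le_sum_abs _ _).trans ?_
    have hterm : ∀ m, |HP (fun γ => F γ a) (fun i => x i - a i) m β| ≤
        C * (Nat.factorial j : ℝ) * R⁻¹ ^ j *
          ((2 * ρ * D * (n + 2) * R) ^ (m + j) * s (m + j)) := by
      intro m
      refine le_trans ?_ (taylor_term_le hC hρ hD hR hs hM hc m j)
      have := hM0 (m + j)
      refine (abs_HP_le (K := C * ρ ^ (m + j) * M (m + j)) hxa hR.le m β fun γ hγ => ?_).trans ?_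
      · have e : ∑ i, (β + γ) i = m + j := by simp [Finset.sum_add_distrib, hγ, hj, add_comm]
        rw [← e]; exact h1 _ a ha
      · gcongr
        linarith
    refine (Finset.sum_le_sum fun m _ => hterm m).trans ?_
    rw [← Finset.mul_sum]
    gcongr
    rw [← Finset.sum_image (f := fun l => (2 * ρ * D * (n + 2) * R) ^ l * s l)
      (g := fun m => m + j) (fun m _ m' _ h => Nat.add_right_cancel h)]
    refine Finset.sum_le_sum_of_subset_of_nonneg ?_ fun l _ _ => by
      have := hs l
      positivity
    intro l hl
    obtain ⟨m, hm, rfl⟩ := Finset.mem_image.1 hl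
    rw [Finset.mem_Ico] at hm ⊢
    omega
  -- change of the base point at the fixed degree `q`: re-expanding at `b`, the coefficients of
  -- the difference are Whitney remainders
  have hB : |TT q (fun γ => F γ b) (fun i => x i - b i) β
      - TT q (fun γ => F γ a) (fun i => x i - a i) β|
      ≤ C * (Nat.factorial j : ℝ) * R⁻¹ ^ j * ((2 * ρ * D * (n + 2) * R) ^ q * s q) := by
    have hsq := hs q
    rcases le_or_gt q j with hqj | hqj
    · rw [TT_of_le _ _ hqj, TT_of_le _ _ hqj, sub_zero, abs_zero]; positivity
    rw [TT_rebase q (fun γ => F γ a) a b, ← TT_sub]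
    have hMq := hM0 q
    have := abs_TT_le (q := q) (K := fun l => C * ρ ^ q * M q *
        ((2 * R) ^ (q - l) / (Nat.factorial (q - l) : ℝ)))
      (G := (fun γ => F γ b) - fun α => TT q (fun γ => F γ a) (fun i => b i - a i) α)
      hxb hR.le β fun γ hγ => ?_
    · refine this.trans ?_
      obtain ⟨k, hk⟩ : ∃ k, q = k + j := ⟨q - j, by omega⟩
      have hk' : q - j = k := by omega
      rw [← hj, hk']
      have hterm := taylor_term_le hC hρ hD hR hs hM hc k j
      rw [← hk] at hterm
      refine le_trans ?_ hterm
      have e : ∀ m, q - (j + m) = k - m := fun m => by omega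
      simp only [e]
      calc _ = (∑ m ∈ Finset.range k, ((n : ℝ) * R) ^ m / (Nat.factorial m : ℝ) *
            ((2 * R) ^ (k - m) / (Nat.factorial (k - m) : ℝ))) * (C * ρ ^ q * M q) := by
            rw [Finset.sum_mul]; exact Finset.sum_congr rfl fun m _ => by ring
        _ ≤ _ := by
            gcongr
            exact sum_exp_le n k R hR.le
    · simp only [Pi.sub_apply]
      rw [Rrem_eq F a b hγ]
      have h3 := h2 (q - 1) γ (by omega) a ha b hb
      rw [show q - 1 + 1 = q by omega] at h3
      refine h3.trans ?_
      rw [mul_div_assoc]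
      gcongr
  rw [mul_add]
  have := abs_sub_le (TT q' (fun γ => F γ a) (fun i => x i - a i) β)
    (TT q (fun γ => F γ a) (fun i => x i - a i) β) (TT q (fun γ => F γ b) (fun i => x i - b i) β)
  rw [abs_sub_comm (TT q (fun γ => F γ a) (fun i => x i - a i) β)] at this
  linarith

end

/-! ### Partitions of unity -/

section
variable {n : ℕ}

/-- The bump `H(x - zr) - H(x - (z+1)r)` on the line. If `H` is a step on `[0, r]`, it is supported
in `[zr, (z+2)r]`, and the bumps with `z ∈ ℤ` telescope to a partition of unity. -/
noncomputable def bump (H : ℝ → ℝ) (r : ℝ) (z : ℤ) (x : ℝ) : ℝ :=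
  H (x - z * r) - H (x - (z + 1) * r)

lemma bump_zero_left {H : ℝ → ℝ} {r : ℝ} (hr : 0 < r) (h0 : ∀ x ≤ 0, H x = 0) {z : ℤ} {x : ℝ}
    (hx : x ≤ z * r) : bump H r z x = 0 := by
  rw [bump, h0 _ (by linarith), h0 _ (by nlinarith), sub_zero]

lemma bump_zero_right {H : ℝ → ℝ} {r : ℝ} (hr : 0 < r) (h1 : ∀ x, r ≤ x → H x = 1) {z : ℤ}
    {x : ℝ} (hx : (z + 2) * r ≤ x) : bump H r z x = 0 := by
  rw [bump, h1 _ (by nlinarith), h1 _ (by nlinarith), sub_self]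

lemma contDiff_bump {H : ℝ → ℝ} (hH : ContDiff ℝ (⊤ : ℕ∞) H) (r : ℝ) (z : ℤ) :
    ContDiff ℝ (⊤ : ℕ∞) (bump H r z) :=
  (hH.comp (contDiff_id.sub contDiff_const)).sub (hH.comp (contDiff_id.sub contDiff_const))

lemma norm_iteratedFDeriv_bump_le {H : ℝ → ℝ} (hH : ContDiff ℝ (⊤ : ℕ∞) H) (r : ℝ) (z : ℤ)
    {j : ℕ} {K : ℝ} (hK : ∀ x, ‖iteratedFDeriv ℝ j H x‖ ≤ K) (x : ℝ) :
    ‖iteratedFDeriv ℝ j (bump H r z) x‖ ≤ 2 * K := by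
  have e : bump H r z = (fun x => H (x - z * r)) - fun x => H (x - (z + 1) * r) := rfl
  have h1 : ∀ c : ℝ, ContDiffAt ℝ j (fun x => H (x - c)) x := fun c =>
    ((hH.comp (contDiff_id.sub contDiff_const)).contDiffAt).of_le (by exact_mod_cast le_top)
  rw [e, iteratedFDeriv_sub_apply (h1 _) (h1 _), iteratedFDeriv_comp_sub, iteratedFDeriv_comp_sub,
    two_mul]
  exact (norm_sub_le _ _).trans (add_le_add (hK _) (hK _))

/-- At every scale `r` there is a finite partition of unity near `E`, subordinate to boxes of
size comparable to `r` centred at points of `E`, with bounded overlap and with derivative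
bounds of class `N`. -/
lemma exists_partition {E : Set (EuclideanSpace ℝ (Fin n))} (hE : Bornology.IsBounded E)
    {ν : ℕ → ℝ} (hν : IsWeightSeqQ ν) (hs : Summable fun k => 1 / ν k) {L r : ℝ} (hL : 0 < L)
    (hr : 0 < r) :
    ∃ (Z : Finset (Fin n → ℤ)) (φ : (Fin n → ℤ) → EuclideanSpace ℝ (Fin n) → ℝ)
      (pt : (Fin n → ℤ) → EuclideanSpace ℝ (Fin n)),
      (∀ z, ContDiff ℝ (⊤ : ℕ∞) (φ z)) ∧
      (∀ z j x, ‖iteratedFDeriv ℝ j (φ z) x‖ ≤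
        (2 / hFun (sS ν) (L * r)) ^ n * (n * (32 * L)) ^ j * prodSeq ν j) ∧
      (∀ z ∈ Z, pt z ∈ E) ∧
      (∀ x, ∃ S ⊆ Z, S.card ≤ 3 ^ n ∧ (∀ z ∈ Z, z ∉ S → φ z =ᶠ[nhds x] fun _ => 0) ∧
        ∀ z ∈ S, ∀ i, |x i - pt z i| ≤ 5 * r) ∧
      ∀ a ∈ E, ∀ᶠ x in nhds a, ∑ z ∈ Z, φ z x = 1 := by
  classical
  obtain ⟨H, hH, hHb, h0, h1⟩ := exists_cutoff hν hs hL hr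
  have hh := hFun_pos hν hs (mul_pos hL hr)
  have hN0 : ∀ k, 0 ≤ prodSeq ν k := fun k => (prodSeq_pos hν k).le
  -- the grid indices whose node lies within `3r` of `E` in the sup-norm; these form `Z`, and
  -- `pt z` is a point of `E` witnessing this
  have hfin : {z : Fin n → ℤ | ∃ a ∈ E, ∀ i, |a i - z i * r| ≤ 3 * r}.Finite := by
    obtain ⟨ρ, hρ⟩ := hE.exists_norm_le
    refine (Set.finite_Icc (fun _ : Fin n => -⌈ρ / r + 3⌉) (fun _ => ⌈ρ / r + 3⌉)).subset ?_
    rintro z ⟨a, ha, hz⟩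
    have hb : ∀ i, |(z i : ℝ)| ≤ ρ / r + 3 := fun i => by
      have h2 := (PiLp.norm_apply_le a i).trans (hρ a ha)
      rw [Real.norm_eq_abs] at h2
      have h3 : |(z i : ℝ) * r| ≤ ρ + 3 * r := by
        have := abs_sub_abs_le_abs_sub ((z i : ℝ) * r) (a i)
        rw [abs_sub_comm] at this
        linarith [hz i]
      rw [abs_mul, abs_of_pos hr] at h3
      rw [div_add' _ _ _ hr.ne', le_div_iff₀ hr]
      exact h3
    refine ⟨fun i => ?_, fun i => ?_⟩
    · have h2 := (abs_le.1 (hb i)).1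
      have h3 := Int.le_ceil (ρ / r + 3)
      have : -(⌈ρ / r + 3⌉ : ℝ) ≤ z i := by linarith
      exact_mod_cast this
    · have h2 := (abs_le.1 (hb i)).2
      exact_mod_cast h2.trans (Int.le_ceil (ρ / r + 3))
  let Z := hfin.toFinset
  have hZ : ∀ z, z ∈ Z ↔ ∃ a ∈ E, ∀ i, |a i - z i * r| ≤ 3 * r := fun z => by simp [Z]
  let pt : (Fin n → ℤ) → EuclideanSpace ℝ (Fin n) := fun z =>
    if h : ∃ a ∈ E, ∀ i, |a i - z i * r| ≤ 3 * r then h.choose else 0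
  have hpt : ∀ z ∈ Z, pt z ∈ E ∧ ∀ i, |pt z i - z i * r| ≤ 3 * r := fun z hz => by
    have h := (hZ z).1 hz
    simp only [pt, dif_pos h]
    exact h.choose_spec
  let φ : (Fin n → ℤ) → EuclideanSpace ℝ (Fin n) → ℝ := fun z x => ∏ i, bump H r (z i) (x i)
  have hcoord : ∀ (z : Fin n → ℤ) i, ContDiff ℝ (⊤ : ℕ∞)
      (fun x : EuclideanSpace ℝ (Fin n) => bump H r (z i) (x i)) := fun z i =>
    (contDiff_bump hH r (z i)).comp
      (EuclideanSpace.proj i : EuclideanSpace ℝ (Fin n) →L[ℝ] ℝ).contDiff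
  refine ⟨Z, φ, pt, fun z => contDiff_prod fun i _ => hcoord z i, fun z j x => ?_,
    fun z hz => (hpt z hz).1, fun x => ?_, fun a ha => ?_⟩
  · have hb : ∀ (i : Fin n) k, ‖iteratedFDeriv ℝ k
        (fun x : EuclideanSpace ℝ (Fin n) => bump H r (z i) (x i)) x‖
        ≤ 2 / hFun (sS ν) (L * r) * (32 * L) ^ k * prodSeq ν k := by
      intro i k
      have e := (EuclideanSpace.proj i : EuclideanSpace ℝ (Fin n) →L[ℝ] ℝ).iteratedFDeriv_comp_right
        (n := (⊤ : ℕ∞)) (contDiff_bump hH r (z i)) x (i := k) (by exact_mod_cast le_top)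
      have e' : (fun x : EuclideanSpace ℝ (Fin n) => bump H r (z i) (x i))
        = bump H r (z i) ∘ (EuclideanSpace.proj i : EuclideanSpace ℝ (Fin n) →L[ℝ] ℝ) := rfl
      rw [e', e]
      refine (ContinuousMultilinearMap.norm_compContinuousLinearMap_le _ _).trans ?_
      have h3 := norm_iteratedFDeriv_bump_le hH r (z i) (fun x => hHb k x)
        ((EuclideanSpace.proj i : EuclideanSpace ℝ (Fin n) →L[ℝ] ℝ) x)
      have h4 : ∏ _k : Fin k, ‖(EuclideanSpace.proj i : EuclideanSpace ℝ (Fin n) →L[ℝ] ℝ)‖ ≤ 1 :=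
        Finset.prod_le_one (fun _ _ => norm_nonneg _) fun _ _ => norm_euclid_proj_le i
      refine (mul_le_of_le_one_right (norm_nonneg _) h4).trans (h3.trans (le_of_eq ?_))
      ring
    have := norm_iteratedFDeriv_prod_le' hN0 (prodSeq_mul_le hν) (prodSeq_zero hν)
      Finset.univ (hcoord z) (x := x) (a := 2 / hFun (sS ν) (L * r)) (A := 32 * L)
      (by positivity) (by positivity) hb j
    simpa using this
  · refine ⟨Z.filter fun z => ∀ i, (z i : ℝ) * r ≤ x i ∧ x i ≤ (z i + 2) * r,
      Finset.filter_subset _ _, ?_, ?_, ?_⟩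
    · have hsub : (Z.filter fun z => ∀ i, (z i : ℝ) * r ≤ x i ∧ x i ≤ (z i + 2) * r) ⊆
          Fintype.piFinset fun i => Finset.Icc (⌊x i / r⌋ - 2) ⌊x i / r⌋ := by
        intro z hz
        rw [Fintype.mem_piFinset]
        intro i
        obtain ⟨h2, h3⟩ := (Finset.mem_filter.1 hz).2 i
        rw [Finset.mem_Icc]
        rw [← le_div_iff₀ hr] at h2
        rw [← div_le_iff₀ hr] at h3
        refine ⟨?_, Int.le_floor.2 h2⟩
        have : (⌊x i / r⌋ : ℝ) ≤ z i + 2 := (Int.floor_le _).trans h3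
        have : ⌊x i / r⌋ ≤ z i + 2 := by exact_mod_cast this
        omega
      refine (Finset.card_le_card hsub).trans (le_of_eq ?_)
      simp [Fintype.card_piFinset]
    · intro z hz hn
      have : ∃ i, x i < z i * r ∨ (z i + 2) * r < x i := by
        by_contra! hcon
        exact hn (Finset.mem_filter.2 ⟨hz, hcon⟩)
      obtain ⟨i, hi⟩ := this
      have hcont : ContinuousAt (fun y : EuclideanSpace ℝ (Fin n) => y i) x :=
        (EuclideanSpace.proj i : EuclideanSpace ℝ (Fin n) →L[ℝ] ℝ).continuous.continuousAt
      rcases hi with hi | hi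
      · filter_upwards [hcont.eventually (gt_mem_nhds hi)] with y hy
        exact Finset.prod_eq_zero (Finset.mem_univ i) (bump_zero_left hr h0 hy.le)
      · filter_upwards [hcont.eventually (lt_mem_nhds hi)] with y hy
        exact Finset.prod_eq_zero (Finset.mem_univ i) (bump_zero_right hr h1 hy.le)
    · intro z hz i
      obtain ⟨hz, hx⟩ := Finset.mem_filter.1 hz
      have h2 := abs_le.1 ((hpt z hz).2 i)
      have h3 := hx i
      rw [abs_le]
      constructor <;> nlinarith
  · have hev : ∀ᶠ x in nhds a, ∀ i, |x i - a i| < r := by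
      rw [Filter.eventually_all]
      intro i
      have hcont : ContinuousAt (fun y : EuclideanSpace ℝ (Fin n) => |y i - a i|) a :=
        ((EuclideanSpace.proj i : EuclideanSpace ℝ (Fin n) →L[ℝ] ℝ).continuous.sub
          continuous_const).abs.continuousAt
      exact hcont.eventually (gt_mem_nhds (by simpa using hr))
    filter_upwards [hev] with x hx
    have hfl : ∀ i, (⌊x i / r⌋ : ℝ) * r ≤ x i ∧ x i < (⌊x i / r⌋ + 1) * r := fun i =>
      ⟨(le_div_iff₀ hr).1 (Int.floor_le _), (div_lt_iff₀ hr).1 (Int.lt_floor_add_one _)⟩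
    -- in each coordinate only the bumps with index `⌊x i / r⌋ - 1` and `⌊x i / r⌋` are nonzero
    -- at `x`, and all of these indices belong to `Z` when `x` is within `r` of `a ∈ E`
    let P := Fintype.piFinset fun i : Fin n => ({⌊x i / r⌋ - 1, ⌊x i / r⌋} : Finset ℤ)
    have hPZ : P ⊆ Z := by
      intro z hz
      rw [hZ]
      refine ⟨a, ha, fun i => ?_⟩
      have h2 := Fintype.mem_piFinset.1 hz i
      rw [Finset.mem_insert, Finset.mem_singleton] at h2
      have h3 := abs_lt.1 (hx i)
      have h4 := hfl i
      rcases h2 with h2 | h2 <;> rw [h2, abs_le] <;> push_cast <;> constructor <;> nlinarith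
    rw [← Finset.sum_subset hPZ]
    · change ∑ z ∈ P, ∏ i, bump H r (z i) (x i) = 1
      rw [← Finset.prod_univ_sum (fun i : Fin n => ({⌊x i / r⌋ - 1, ⌊x i / r⌋} : Finset ℤ))
        (fun i z => bump H r z (x i))]
      refine Finset.prod_eq_one fun i _ => ?_
      rw [Finset.sum_pair (by omega)]
      have h4 := hfl i
      unfold bump
      push_cast
      rw [sub_add_cancel, h1 (x i - (⌊x i / r⌋ - 1) * r) (by linarith),
        h0 (x i - (⌊x i / r⌋ + 1) * r) (by linarith)]
      ring
    · intro z _ hz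
      have : ∃ i, z i ∉ ({⌊x i / r⌋ - 1, ⌊x i / r⌋} : Finset ℤ) := by
        by_contra! hcon
        exact hz (Fintype.mem_piFinset.2 hcon)
      obtain ⟨i, hi⟩ := this
      rw [Finset.mem_insert, Finset.mem_singleton, not_or] at hi
      have h4 := hfl i
      refine Finset.prod_eq_zero (Finset.mem_univ i) ?_
      rcases lt_or_gt_of_ne hi.2 with h5 | h5
      · have h6 : z i + 2 ≤ ⌊x i / r⌋ := by omega
        have h7 : (z i : ℝ) + 2 ≤ ⌊x i / r⌋ := by exact_mod_cast h6
        exact bump_zero_right hr h1 (by nlinarith)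
      · have h6 : ⌊x i / r⌋ + 1 ≤ z i := by omega
        have h7 : (⌊x i / r⌋ : ℝ) + 1 ≤ z i := by exact_mod_cast h6
        exact bump_zero_left hr h0 (by nlinarith)

end

/-! ### Summation of telescoping series -/

section
variable {n : ℕ}

/-- Comparison of the derivatives of `f` with those of `T` through an intermediate function `S`,
such as a partial sum of a series for `f`. -/
lemma abs_pderivMulti_sub_le {f S T : EuclideanSpace ℝ (Fin n) → ℝ}
    (hf : ContDiff ℝ (⊤ : ℕ∞) f) (hS : ContDiff ℝ (⊤ : ℕ∞) S) (hT : ContDiff ℝ (⊤ : ℕ∞) T)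
    (α : Fin n → ℕ) (a : EuclideanSpace ℝ (Fin n)) :
    |pderivMulti α (f - T) a| ≤
      ‖iteratedFDeriv ℝ (∑ i, α i) f a - iteratedFDeriv ℝ (∑ i, α i) S a‖
        + ‖iteratedFDeriv ℝ (∑ i, α i) (S - T) a‖ := by
  have hfin : ∀ {g : EuclideanSpace ℝ (Fin n) → ℝ}, ContDiff ℝ (⊤ : ℕ∞) g →
      ContDiffAt ℝ (∑ i, α i : ℕ) g a := fun hg =>
    hg.contDiffAt.of_le (by exact_mod_cast le_top)
  refine (abs_pderivMulti_le (f := f - T) (hf.sub hT) α a).trans ?_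
  have e : f - T = (f - S) + (S - T) := by abel
  rw [← iteratedFDeriv_sub_apply (hfin hf) (hfin hS), e,
    iteratedFDeriv_add_apply (f := f - S) (g := S - T) (hfin (hf.sub hS)) (hfin (hS.sub hT))]
  exact norm_add_le _ _

/-- Summation of a telescoping series of smooth functions whose partial sums approximate the
Taylor families `T a K` at the points of `E`. -/
lemma exists_extension_of_series {E : Set (EuclideanSpace ℝ (Fin n))} {N : ℕ → ℝ}
    {F : (Fin n → ℕ) → EuclideanSpace ℝ (Fin n) → ℝ}
    {u : ℕ → EuclideanSpace ℝ (Fin n) → ℝ} (hu : ∀ k, ContDiff ℝ (⊤ : ℕ∞) (u k))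
    {c A : ℝ} (hc : 0 < c) (hA : 0 < A)
    (hub : ∀ k j x, ‖iteratedFDeriv ℝ j (u k) x‖ ≤ c * (1 / 2) ^ k * A ^ j * N j)
    (T : EuclideanSpace ℝ (Fin n) → ℕ → (Fin n → ℕ) → EuclideanSpace ℝ (Fin n) → ℝ)
    (hT : ∀ a K, IsFam (T a K))
    (hTF : ∀ a ∈ E, ∀ α, ∀ᶠ K in Filter.atTop, T a K α a = F α a)
    (hST : ∀ a ∈ E, ∀ j K, ‖iteratedFDeriv ℝ j ((fun x => ∑ k ∈ Finset.range K, u k x) - T a K 0) a‖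
      ≤ c * (1 / 2) ^ K * A ^ j * N j) :
    ∃ f : EuclideanSpace ℝ (Fin n) → ℝ,
      MemBM N f ∧ ∀ α : Fin n → ℕ, ∀ a ∈ E, pderivMulti α f a = F α a := by
  have hv : ∀ j : ℕ, Summable fun k : ℕ => c * (1 / 2) ^ k * A ^ j * N j := fun j =>
    ((summable_geometric_two.mul_left c).mul_right (A ^ j)).mul_right (N j)
  have hf : ContDiff ℝ (⊤ : ℕ∞) fun x => ∑' k, u k x :=
    contDiff_tsum (N := (⊤ : ℕ∞)) (v := fun j k => c * (1 / 2) ^ k * A ^ j * N j) hu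
      (fun j _ => hv j) fun j k x _ => hub k j x
  have hD : ∀ (j : ℕ) x, iteratedFDeriv ℝ j (fun x => ∑' k, u k x) x
      = ∑' k, iteratedFDeriv ℝ j (u k) x := fun j x =>
    iteratedFDeriv_tsum_apply (N := (⊤ : ℕ∞)) (v := fun j k => c * (1 / 2) ^ k * A ^ j * N j) hu
      (fun j _ => hv j) (fun j k x _ => hub k j x) (by exact_mod_cast le_top) x
  refine ⟨fun x => ∑' k, u k x, ⟨hf, 2 * c, by positivity, A, hA, fun α x => ?_⟩,
    fun α a ha => ?_⟩
  · refine (abs_pderivMulti_le hf α x).trans ?_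
    rw [hD]
    have h1 : HasSum (fun k : ℕ => c * (1 / 2) ^ k * A ^ (∑ i, α i) * N (∑ i, α i))
        (c * 2 * A ^ (∑ i, α i) * N (∑ i, α i)) :=
      ((hasSum_geometric_two.mul_left c).mul_right _).mul_right _
    refine (tsum_of_norm_bounded h1 fun k => hub k _ x).trans (le_of_eq ?_)
    ring
  · set j := ∑ i, α i with hj
    have hlim1 : Filter.Tendsto (fun K => ∑ k ∈ Finset.range K, iteratedFDeriv ℝ j (u k) a)
        Filter.atTop (nhds (iteratedFDeriv ℝ j (fun x => ∑' k, u k x) a)) := by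
      rw [hD]
      exact (Summable.of_norm_bounded (hv j) fun k => hub k j a).hasSum.tendsto_sum_nat
    have hlim2 : Filter.Tendsto (fun K : ℕ => c * (1 / 2) ^ K * A ^ j * N j)
        Filter.atTop (nhds 0) := (hv j).tendsto_atTop_zero
    have hlim := ((tendsto_const_nhds (x := iteratedFDeriv ℝ j (fun x => ∑' k, u k x) a)).sub
      hlim1).norm.add hlim2
    rw [sub_self, norm_zero, add_zero] at hlim
    have hle : |pderivMulti α (fun x => ∑' k, u k x) a - F α a| ≤ 0 := by
      refine ge_of_tendsto hlim ?_
      filter_upwards [hTF a ha α] with K hK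
      have hS : ContDiff ℝ (⊤ : ℕ∞) fun x => ∑ k ∈ Finset.range K, u k x :=
        ContDiff.sum fun k _ => hu k
      have hTs := (hT a K).contDiff 0
      have e1 : pderivMulti α (fun x => ∑' k, u k x) a - F α a
          = pderivMulti α ((fun x => ∑' k, u k x) - T a K 0) a := by
        rw [pderivMulti_sub hf hTs, Pi.sub_apply, (hT a K).pderivMulti_eq, hK]
      rw [e1]
      refine (abs_pderivMulti_sub_le hf hS hTs α a).trans (add_le_add (le_of_eq ?_) (hST a ha j K))
      rw [iteratedFDeriv_fun_sum_apply fun k _ =>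
        (hu k).contDiffAt.of_le (by exact_mod_cast le_top)]
    exact sub_eq_zero.1 (abs_nonpos_iff.1 hle)

/-- Only the members of the finite set `S` of functions not vanishing near `x` count; in the
application its size is bounded independently of the scale. -/
lemma norm_iteratedFDeriv_sum_le_card {V ι : Type*} [NormedAddCommGroup V] [NormedSpace ℝ V]
    {Z S : Finset ι} {ψ : ι → V → ℝ} (hψ : ∀ z, ContDiff ℝ (⊤ : ℕ∞) (ψ z)) (hS : S ⊆ Z)
    {x : V} {j : ℕ} {K : ℝ} (h0 : ∀ z ∈ Z, z ∉ S → ψ z =ᶠ[nhds x] fun _ => 0)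
    (h1 : ∀ z ∈ S, ‖iteratedFDeriv ℝ j (ψ z) x‖ ≤ K) :
    ‖iteratedFDeriv ℝ j (fun y => ∑ z ∈ Z, ψ z y) x‖ ≤ S.card * K := by
  rw [iteratedFDeriv_fun_sum_apply fun z _ =>
    (hψ z).contDiffAt.of_le (by exact_mod_cast le_top), ← Finset.sum_subset hS]
  · refine (norm_sum_le _ _).trans ((Finset.sum_le_sum h1).trans ?_)
    simp
  · intro z hz hn
    rw [((h0 z hz hn).iteratedFDeriv ℝ j).eq_of_nhds]
    simp

end

/-! ### The key estimate -/

section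
variable {n : ℕ}

/-- With the degree `gam ν t` prescribed by the scale `t = 4κR`, differences of Taylor
polynomials at neighbouring points and consecutive scales are so small that they absorb the
factor `h(t/B)^{-2n}` lost to the two cutoffs and still gain a factor `t`. -/
lemma norm_iteratedFDeriv_taylor_sub_le {F : (Fin n → ℕ) → EuclideanSpace ℝ (Fin n) → ℝ}
    {E : Set (EuclideanSpace ℝ (Fin n))} {M ν ν' : ℕ → ℝ} (hν : IsWeightSeqQ ν)
    (hs : Summable fun k => 1 / ν k) (hν' : IsWeightSeqQ ν') (hs' : Summable fun k => 1 / ν' k)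
    {C ρ D B R κ t : ℝ} (hC : 0 < C) (hρ : 0 < ρ) (hD : 0 < D) (hB : 0 < B) (hR : 0 < R)
    (hM0 : ∀ k, 0 ≤ M k) (hM : ∀ k, M k ≤ D ^ k * (Nat.factorial k : ℝ) * sS ν k)
    (h1 : ∀ α : Fin n → ℕ, ∀ a ∈ E, |F α a| ≤ C * ρ ^ (∑ i, α i) * M (∑ i, α i))
    (h2 : ∀ p : ℕ, ∀ α : Fin n → ℕ, ∑ i, α i ≤ p → ∀ a ∈ E, ∀ b ∈ E,
      |Rrem F a p α b| ≤ C * ρ ^ (p + 1) * M (p + 1) *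
        ‖b - a‖ ^ (p + 1 - ∑ i, α i) / (Nat.factorial (p + 1 - ∑ i, α i) : ℝ))
    {e : ℕ} (he : 2 * n + 2 ≤ e)
    (hBe : ∀ t > 0, hFun (sS ν) (B * t) ≤ hFun (sS ν') t ^ e)
    (hκ : κ = 2 * ρ * D * (n + 2)) (ht : t = 4 * κ * R)
    {a b x : EuclideanSpace ℝ (Fin n)} (ha : a ∈ E) (hb : b ∈ E)
    (hxa : ∀ i, |x i - a i| ≤ R) (hxb : ∀ i, |x i - b i| ≤ R) (hab : ‖b - a‖ ≤ 2 * R)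
    {q' : ℕ} (hq : gam ν t ≤ q') (hq' : q' ≤ gam ν (t / 2)) (j : ℕ) :
    ‖iteratedFDeriv ℝ j (fun x => TT q' (fun γ => F γ a) (fun i => x i - a i) 0
      - TT (gam ν t) (fun γ => F γ b) (fun i => x i - b i) 0) x‖
      ≤ hFun (sS ν') (t / B) ^ (2 * n) * (3 * C * sS ν' 1 * (t / B))
        * (4 * κ * (n + 1) / B) ^ j * prodSeq ν' j := by
  have hκ0 : 0 < κ := by rw [hκ]; positivity
  have ht0 : 0 < t := by rw [ht]; positivity
  have hs0 : ∀ k, 0 ≤ sS ν k := fun k => (sS_pos hν hs k).le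
  set q := gam ν t with hqdef
  -- with `κR = t/4`, a term of order `l` is `2 ^ (-l)` times `s_l (t/2) ^ l`, and the latter
  -- decreases in `l` as long as `l ≤ Γ(t/2)`
  have hterm : ∀ l, q ≤ l → l ≤ q' → (2 * ρ * D * (n + 2) * R) ^ l * sS ν l
      ≤ (1 / 2) ^ l * hFun (sS ν) t := by
    intro l hl hl'
    have h3 := sS_mul_pow_anti hν hs (half_pos ht0) hl (hl'.trans hq')
    have h4 : sS ν q * (t / 2) ^ q ≤ hFun (sS ν) t := by
      rw [hFun_eq hν hs ht0, ← hqdef]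
      have := hs0 q
      gcongr
      linarith
    have h5 : (2 * ρ * D * (n + 2) * R) ^ l = (1 / 2) ^ l * (t / 2) ^ l := by
      rw [← mul_pow, ht, hκ]; ring
    rw [h5, mul_assoc, mul_comm ((t / 2) ^ l)]
    gcongr
    exact h3.trans h4
  have hh0 := (hFun_pos hν hs ht0).le
  have hsum : ∑ l ∈ Finset.Ico q q', (2 * ρ * D * (n + 2) * R) ^ l * sS ν l
      + (2 * ρ * D * (n + 2) * R) ^ q * sS ν q ≤ 3 * hFun (sS ν) t := by
    have h3 : ∑ l ∈ Finset.Ico q q', (2 * ρ * D * (n + 2) * R) ^ l * sS ν l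
        ≤ 2 * hFun (sS ν) t := by
      refine (Finset.sum_le_sum fun l hl => hterm l (Finset.mem_Ico.1 hl).1
        (Finset.mem_Ico.1 hl).2.le).trans ?_
      rw [← Finset.sum_mul]
      gcongr
      exact (summable_geometric_two.sum_le_tsum _ fun _ _ => by positivity).trans_eq
        tsum_geometric_two
    have h4 : (2 * ρ * D * (n + 2) * R) ^ q * sS ν q ≤ 1 * hFun (sS ν) t :=
      (hterm q le_rfl hq).trans (by gcongr; exact pow_le_one₀ (by norm_num) (by norm_num))
    linarith
  set y := hFun (sS ν') (t / B) with hy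
  have htB : 0 < t / B := div_pos ht0 hB
  have hy0 : 0 < y := hFun_pos hν' hs' htB
  have hy1 : y ≤ 1 := hFun_le_one hν' hs' htB.le
  have hs1 := sS_pos hν' hs' 1
  have hsj := sS_pos hν' hs' j
  -- of the `2n + 2` factors `y`, one is bounded by the `j`-th term of the infimum, which gives
  -- `s'_j`, and one by the first term, which gives the decay in `t`
  have hhy : hFun (sS ν) t ≤ y ^ (2 * n) * ((sS ν' j * (t / B) ^ j) * (sS ν' 1 * (t / B))) := by
    have h3 := hBe (t / B) htB
    rw [mul_div_cancel₀ _ hB.ne'] at h3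
    have h4 : y ^ e ≤ y ^ (2 * n + 2) := pow_le_pow_of_le_one hy0.le hy1 he
    refine (h3.trans h4).trans ?_
    rw [pow_add, pow_two]
    have h5 := hFun_le hν' hs' htB.le j
    have h6 := hFun_le hν' hs' htB.le 1
    rw [pow_one] at h6
    gcongr
  have hfam := (isFam_TT q' (fun γ => F γ a) a).sub (isFam_TT q (fun γ => F γ b) b)
  have hRj : 0 ≤ R⁻¹ ^ j := by positivity
  refine (hfam.norm_iteratedFDeriv_le (x := x) (K := C * (Nat.factorial j : ℝ) * R⁻¹ ^ j *
    (3 * (y ^ (2 * n) * ((sS ν' j * (t / B) ^ j) * (sS ν' 1 * (t / B))))))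
    (by positivity) j 0 fun γ hγ => ?_).trans ?_
  · rw [zero_add]
    have h3 := abs_TT_sub_le hC.le hρ.le hD.le hR hs0 hM0 hM h1 h2 ha hb hxa hxb hab hq γ
    rw [hγ] at h3
    refine h3.trans ?_
    gcongr
    linarith
  · have h3 : ((n : ℝ) + 1) * R⁻¹ * (t / B) = 4 * κ * (n + 1) / B := by
      rw [ht]; field_simp
    calc _ = y ^ (2 * n) * (3 * C * sS ν' 1 * (t / B)) * (((n : ℝ) + 1) * R⁻¹ * (t / B)) ^ j *
          ((Nat.factorial j : ℝ) * sS ν' j) := by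
          rw [mul_pow, mul_pow]; ring
      _ ≤ _ := by
          rw [h3]
          have := factorial_mul_sS_le hν' hs' j
          gcongr

lemma norm_le_of_coord {v : EuclideanSpace ℝ (Fin n)} {c : ℝ} (h : ∀ i, |v i| ≤ c) :
    ‖v‖ ≤ n * c := by
  have hv : v = ∑ i, v i • (EuclideanSpace.single i (1 : ℝ) : EuclideanSpace ℝ (Fin n)) := by
    ext k
    simp [Finset.sum_apply, Pi.single_apply]
  rw [hv]
  refine (norm_sum_le _ _).trans ((Finset.sum_le_sum (g := fun _ => c) fun i _ => ?_).trans ?_)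
  · simpa [norm_smul] using h i
  · simp

end

/-! ### The extension -/

/-- Corollary 5.5: if for all `M ∈ 𝔐` there is `N ∈ 𝔑` with `∑_{ℓ≥k} 1/ν_ℓ ≲ k/μ_k` and
`μ ≲ ν`, then every Whitney jet of class `B^{𝔐}` on a compact `E ⊆ ℝ^n` extends to a
function in `⋃_{Ṅ ∈ 𝔑} B^{Ṅ}(ℝ^n)`. -/
theorem stmt_15 (n : ℕ) (𝔑 𝔐 : Set (ℕ → ℝ)) (hadm : IsAdmissible 𝔑)
    (h𝔐 : IsWeightMatrix 𝔐)
    (hlink : ∀ μ ∈ 𝔐, ∃ ν ∈ 𝔑,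
      (∃ C > 0, ∀ k : ℕ, 1 ≤ k → tailSum ν k ≤ C * ((k : ℝ) / μ k)) ∧
      (∃ C > 0, ∀ k : ℕ, μ k ≤ C * ν k))
    (E : Set (EuclideanSpace ℝ (Fin n))) (hE : IsCompact E)
    (μ : ℕ → ℝ) (hμ : μ ∈ 𝔐)
    (F : (Fin n → ℕ) → EuclideanSpace ℝ (Fin n) → ℝ)
    (hF : IsWhitneyJet (prodSeq μ) E F) :
    ∃ ν' ∈ 𝔑, ∃ f : EuclideanSpace ℝ (Fin n) → ℝ,
      MemBM (prodSeq ν') f ∧ ∀ α : Fin n → ℕ, ∀ a ∈ E, pderivMulti α f a = F α a := by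
  obtain ⟨ν, hν𝔑, hl1, hl2⟩ := hlink μ hμ
  have hνw := hadm.1 ν hν𝔑
  have hs : Summable fun k => 1 / ν k := hadm.2.2.2.1 ν hν𝔑
  obtain ⟨D, hD, hMD⟩ := prodSeq_le_factorial_sS (h𝔐.1 μ hμ) hνw hs hl1 hl2
  -- the cutoffs of two consecutive scales cost `h ^ (-2n)`; two further powers are needed to
  -- produce `N'_j` and the decay of the series (`2 ^ e ≥ e` for `e = 2n + 2`)
  obtain ⟨ν', hν', B, hB, hBe⟩ := exists_hFun_le_pow hadm (2 * n + 2) ν hν𝔑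
  have hν'w := hadm.1 ν' hν'
  have hs' : Summable fun k => 1 / ν' k := hadm.2.2.2.1 ν' hν'
  obtain ⟨-, C, hC, ρ, hρ, hF1, hF2⟩ := hF
  refine ⟨ν', hν', ?_⟩
  have hN0 : ∀ k, 0 ≤ prodSeq ν' k := fun k => (prodSeq_pos hν'w k).le
  have hN := prodSeq_mul_le hν'w
  have hnn : (0 : ℝ) ≤ n := n.cast_nonneg
  obtain ⟨κ, hκ⟩ : ∃ κ, κ = 2 * ρ * D * ((n : ℝ) + 2) := ⟨_, rfl⟩
  have hκ0 : 0 < κ := by rw [hκ]; positivity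
  have hτ := tauSeq_pos hνw hs 1
  -- the scale `t k` governs the degree `q k`, and `r k` is the size of the boxes
  obtain ⟨t, ht⟩ : ∃ t : ℕ → ℝ, ∀ k, t k = tauSeq ν 1 * (1 / 2) ^ k := ⟨_, fun _ => rfl⟩
  have ht0 : ∀ k, 0 < t k := fun k => by rw [ht]; positivity
  have htS : ∀ k, t (k + 1) = t k / 2 := fun k => by rw [ht, ht, pow_succ]; ring
  obtain ⟨q, hq⟩ : ∃ q : ℕ → ℕ, ∀ k, q k = gam ν (t k) := ⟨_, fun _ => rfl⟩
  have hq0 : q 0 = 0 := by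
    rw [hq]
    exact Nat.le_zero.1 (gam_le_of (by rw [ht]; simp))
  obtain ⟨r, hr⟩ : ∃ r : ℕ → ℝ, ∀ k, r k = t k / (20 * (n + 1) * κ) := ⟨_, fun _ => rfl⟩
  have hr0 : ∀ k, 0 < r k := fun k => by rw [hr]; have := ht0 k; positivity
  have hrS : ∀ k, r (k + 1) = r k / 2 := fun k => by rw [hr, hr, htS]; ring
  obtain ⟨L, hL⟩ : ∃ L, L = 2 * (20 * (n + 1) * κ) / B := ⟨_, rfl⟩
  have hL0 : 0 < L := by rw [hL]; positivity
  have hLr : ∀ k, L * r k = 2 * t k / B := fun k => by rw [hL, hr]; field_simp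
  obtain ⟨y, hy⟩ : ∃ y : ℕ → ℝ, ∀ k, y k = hFun (sS ν') (t k / B) := ⟨_, fun _ => rfl⟩
  have hy0 : ∀ k, 0 < y k := fun k => by
    rw [hy]; exact hFun_pos hν'w hs' (div_pos (ht0 k) hB)
  choose Z φ pt hφ hφb hpt hcov hone using fun k =>
    exists_partition hE.isBounded hν'w hs' hL0 (hr0 k)
  obtain ⟨a₁, ha₁⟩ : ∃ a₁ : ℝ, a₁ = n * (32 * L) := ⟨_, rfl⟩
  have ha₁0 : 0 ≤ a₁ := by rw [ha₁]; positivity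
  obtain ⟨a₂, ha₂⟩ : ∃ a₂ : ℝ, a₂ = 4 * κ * (n + 1) / B := ⟨_, rfl⟩
  have ha₂0 : 0 < a₂ := by rw [ha₂]; positivity
  obtain ⟨w, hw⟩ : ∃ w : ℕ → ℝ, ∀ k, w k = 3 * C * sS ν' 1 * (t k / B) := ⟨_, fun _ => rfl⟩
  have hs1 := sS_pos hν'w hs' 1
  have hw0 : ∀ k, 0 < w k := fun k => by rw [hw]; have := ht0 k; positivity
  have hwk : ∀ k, w k = w 0 * (1 / 2) ^ k := fun k => by rw [hw, hw, ht, ht]; ring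
  have hcut : ∀ k z x j, ‖iteratedFDeriv ℝ j (φ k z) x‖
      ≤ (2 / y k) ^ n * a₁ ^ j * prodSeq ν' j := by
    intro k z x j
    refine (hφb k z j x).trans ?_
    rw [ha₁, hLr, hy]
    have h1 := hFun_pos hν'w hs' (div_pos (ht0 k) hB)
    have h2 : hFun (sS ν') (t k / B) ≤ hFun (sS ν') (2 * t k / B) :=
      hFun_mono hν'w hs' (div_pos (ht0 k) hB).le (by have := ht0 k; gcongr; linarith)
    have := hN0 j
    have := h1.trans_le h2
    gcongr
  have hcut' : ∀ k z x j, ‖iteratedFDeriv ℝ j (φ (k + 1) z) x‖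
      ≤ (2 / y k) ^ n * a₁ ^ j * prodSeq ν' j := by
    intro k z x j
    refine (hφb (k + 1) z j x).trans (le_of_eq ?_)
    rw [ha₁, hLr, hy, htS, mul_div_cancel₀ _ (two_ne_zero' ℝ)]
  obtain ⟨T, hT⟩ : ∃ T : EuclideanSpace ℝ (Fin n) → ℕ → (Fin n → ℕ) →
      EuclideanSpace ℝ (Fin n) → ℝ,
      ∀ a k, T a k = fun β x => TT (q k) (fun γ => F γ a) (fun i => x i - a i) β :=
    ⟨_, fun _ _ => rfl⟩
  have hTfam : ∀ a k, IsFam (T a k) := fun a k => by rw [hT]; exact isFam_TT _ _ a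
  have hΔ : ∀ k k' a b x, a ∈ E → b ∈ E → (k' = k ∨ k' = k + 1) →
      (∀ i, |x i - a i| ≤ 5 * r k) → (∀ i, |x i - b i| ≤ 5 * r k) → ∀ j,
      ‖iteratedFDeriv ℝ j (fun x => T a k' 0 x - T b k 0 x) x‖
        ≤ y k ^ (2 * n) * w k * a₂ ^ j * prodSeq ν' j := by
    intro k k' a b x ha hb hk hxa hxb j
    have hrk := hr0 k
    have hR : 5 * r k ≤ 5 * (n + 1) * r k := by nlinarith [mul_nonneg hnn hrk.le]
    have hab : ‖b - a‖ ≤ 2 * (5 * (n + 1) * r k) := by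
      refine (norm_le_of_coord (c := 10 * r k) fun i => ?_).trans
        (by nlinarith [mul_nonneg hnn hrk.le])
      have h1 := abs_le.1 (hxa i)
      have h2 := abs_le.1 (hxb i)
      rw [PiLp.sub_apply, abs_le]
      constructor <;> linarith [h1.1, h1.2, h2.1, h2.2]
    have hq1 : gam ν (t k) ≤ q k' := by
      rw [hq]
      rcases hk with rfl | rfl
      · rfl
      · exact gam_anti hνw hs (ht0 _) (by rw [htS]; linarith [ht0 k])
    have hq2 : q k' ≤ gam ν (t k / 2) := by
      rw [hq]
      rcases hk with rfl | rfl
      · exact gam_anti hνw hs (half_pos (ht0 _)) (by linarith [ht0 k'])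
      · rw [htS]
    have h := norm_iteratedFDeriv_taylor_sub_le (R := 5 * (n + 1) * r k) hνw hs hν'w hs' hC hρ
      hD hB (by positivity)
      (fun k => (prodSeq_pos (h𝔐.1 μ hμ) k).le) hMD hF1 hF2 Nat.lt_two_pow_self.le hBe hκ
      (t := t k) (by rw [hr]; field_simp; ring) ha hb (fun i => (hxa i).trans hR)
      (fun i => (hxb i).trans hR) hab hq1 hq2 j
    rw [hT, hT, hw, hy, ha₂, hq k]
    exact h
  obtain ⟨u, hu⟩ : ∃ u : ℕ → EuclideanSpace ℝ (Fin n) → ℝ, ∀ k, u k = fun x =>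
      ∑ p ∈ Z (k + 1) ×ˢ Z k, φ (k + 1) p.1 x * φ k p.2 x *
        (T (pt (k + 1) p.1) (k + 1) 0 x - T (pt k p.2) k 0 x) := ⟨_, fun _ => rfl⟩
  have hψ : ∀ k (p : (Fin n → ℤ) × (Fin n → ℤ)), ContDiff ℝ (⊤ : ℕ∞) fun x =>
      φ (k + 1) p.1 x * φ k p.2 x *
        (T (pt (k + 1) p.1) (k + 1) 0 x - T (pt k p.2) k 0 x) := fun k p =>
    ((hφ _ _).mul (hφ _ _)).mul (((hTfam _ _).contDiff 0).sub ((hTfam _ _).contDiff 0))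
  have hcard : ∀ s : ℕ, s ≤ 3 ^ n → (s : ℝ) ≤ 3 ^ n := fun s h => by exact_mod_cast h
  have hA : 0 < a₁ + a₁ + a₂ := by positivity
  -- `36 = 3² · 2²`: at most `3 ^ n` cutoffs of each of two scales are nonzero near a point, and
  -- each of them carries a factor `2 ^ n`
  refine exists_extension_of_series (u := u) (c := 36 ^ n * w 0) (A := a₁ + a₁ + a₂)
    (fun k => ?_) (by have := hw0 0; positivity) hA (fun k j x => ?_) T hTfam
    (fun a ha α => ?_) fun a ha j K => ?_
  · rw [hu]
    exact ContDiff.sum fun p _ => hψ k p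
  · obtain ⟨S₁, hS₁, hc₁, hz₁, hx₁⟩ := hcov (k + 1) x
    obtain ⟨S₂, hS₂, hc₂, hz₂, hx₂⟩ := hcov k x
    have hyk := hy0 k
    have hwk0 := hw0 k
    have hNj := hN0 j
    rw [hu]
    refine (norm_iteratedFDeriv_sum_le_card (S := S₁ ×ˢ S₂)
      (K := (2 / y k) ^ n * (2 / y k) ^ n * (y k ^ (2 * n) * w k) * (a₁ + a₁ + a₂) ^ j *
        prodSeq ν' j)
      (hψ k) (Finset.product_subset_product hS₁ hS₂) (fun p hp hpS => ?_) fun p hp => ?_).trans ?_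
    · rw [Finset.mem_product] at hp
      by_cases h1 : p.1 ∈ S₁
      · have h2 : p.2 ∉ S₂ := fun h2 => hpS (Finset.mem_product.2 ⟨h1, h2⟩)
        filter_upwards [hz₂ p.2 hp.2 h2] with x' hx'
        rw [hx', mul_zero, zero_mul]
      · filter_upwards [hz₁ p.1 hp.1 h1] with x' hx'
        rw [hx', zero_mul, zero_mul]
    · rw [Finset.mem_product] at hp
      have hrk := hr0 k
      exact norm_iteratedFDeriv_mul_le' hN0 hN ((hφ _ _).mul (hφ _ _))
        (((hTfam _ _).contDiff 0).sub ((hTfam _ _).contDiff 0)) (by positivity) (by positivity)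
        (by positivity) ha₂0.le
        (fun i => norm_iteratedFDeriv_mul_le' hN0 hN (hφ _ _) (hφ _ _) (by positivity)
          (by positivity) ha₁0 ha₁0 (fun i => hcut' k _ x i) (fun i => hcut k _ x i) i)
        (fun i => hΔ k (k + 1) _ _ x (hpt _ _ (hS₁ hp.1)) (hpt _ _ (hS₂ hp.2)) (Or.inr rfl)
          (fun i => (hx₁ _ hp.1 i).trans (by rw [hrS]; linarith)) (hx₂ _ hp.2) i) j
    · have e1 : (2 / y k) ^ n * (2 / y k) ^ n * (y k ^ (2 * n) * w k) = 4 ^ n * w k := by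
        rw [div_pow, pow_mul, sq, mul_pow]
        field_simp
        rw [← pow_mul, mul_comm n 2, pow_mul]
        norm_num
      have e2 : (36 : ℝ) ^ n = 3 ^ n * 3 ^ n * 4 ^ n := by
        rw [← mul_pow, ← mul_pow]; norm_num
      rw [e1, Finset.card_product, Nat.cast_mul]
      have h3 := mul_le_mul (hcard _ hc₁) (hcard _ hc₂) (Nat.cast_nonneg _) (by positivity)
      calc _ ≤ (3 ^ n * 3 ^ n : ℝ) * (4 ^ n * w k * (a₁ + a₁ + a₂) ^ j * prodSeq ν' j) := by
            gcongr
        _ = _ := by rw [hwk k, e2]; ring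
  · have hlim : Filter.Tendsto t Filter.atTop (nhds 0) := by
      rw [funext ht, ← mul_zero (tauSeq ν 1)]
      exact (tendsto_pow_atTop_nhds_zero_of_lt_one (by norm_num) (by norm_num)).const_mul _
    -- the degree at scale `t K` exceeds `|α|` as soon as `t K < τ_{|α|+1}`
    filter_upwards [hlim.eventually (gt_mem_nhds (tauSeq_pos hνw hs ((∑ i, α i) + 1)))] with K hK
    have hlt := lt_gam_of hνw hs (ht0 K) hK
    rw [hT]
    have e : (fun i => a i - a i) = (0 : Fin n → ℝ) := by ext; simp
    rw [← hq] at hlt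
    simp only [e]
    exact TT_zero_right _ hlt
  · have hev : ∀ᶠ x in nhds a, ∀ k ∈ Finset.range (K + 1), ∑ z ∈ Z k, φ k z x = 1 :=
      (Filter.eventually_all_finset _).2 fun k _ => hone k a ha
    -- near `a` the series telescopes, since the cutoffs of each scale sum to one there
    have heq : ((fun x => ∑ k ∈ Finset.range K, u k x) - T a K 0) =ᶠ[nhds a]
        fun x => ∑ z ∈ Z K, φ K z x * (T (pt K z) K 0 x - T a K 0 x) := by
      filter_upwards [hev] with x hx
      have htel : ∀ k ∈ Finset.range K, u k x =
          (fun k => ∑ z ∈ Z k, φ k z x * T (pt k z) k 0 x) (k + 1)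
          - (fun k => ∑ z ∈ Z k, φ k z x * T (pt k z) k 0 x) k := by
        intro k hk
        have hk := Finset.mem_range.1 hk
        have h1 := hx (k + 1) (Finset.mem_range.2 (by omega))
        have h2 := hx k (Finset.mem_range.2 (by omega))
        rw [hu]
        beta_reduce
        calc _ = (∑ z ∈ Z (k + 1), φ (k + 1) z x * T (pt (k + 1) z) (k + 1) 0 x)
                * (∑ z ∈ Z k, φ k z x)
              - (∑ z ∈ Z (k + 1), φ (k + 1) z x)
                * ∑ z ∈ Z k, φ k z x * T (pt k z) k 0 x := by
              rw [Finset.sum_mul_sum, Finset.sum_mul_sum, ← Finset.sum_product',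
                ← Finset.sum_product', ← Finset.sum_sub_distrib]
              exact Finset.sum_congr rfl fun p _ => by ring
          _ = _ := by rw [h1, h2, mul_one, one_mul]
      -- the Taylor polynomials of the first scale `t 0 = τ_1` have degree `< 0`
      have hzero : ∀ z, T (pt 0 z) 0 0 x = 0 := fun z => by
        rw [hT, hq0]
        exact TT_of_le _ _ (Nat.zero_le _)
      rw [Pi.sub_apply, Finset.sum_congr rfl htel, Finset.sum_range_sub
        fun k => ∑ z ∈ Z k, φ k z x * T (pt k z) k 0 x]
      simp only [hzero, mul_zero, Finset.sum_const_zero, sub_zero, mul_sub, Finset.sum_sub_distrib]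
      rw [← Finset.sum_mul, hx K (Finset.self_mem_range_succ K), one_mul]
    rw [(heq.iteratedFDeriv ℝ j).eq_of_nhds]
    obtain ⟨S, hS, hcS, hzS, hxS⟩ := hcov K a
    have hyk := hy0 K
    have hy1 : y K ≤ 1 := by rw [hy]; exact hFun_le_one hν'w hs' (div_pos (ht0 K) hB).le
    have hwk0 := hw0 K
    have hNj := hN0 j
    have hrk := hr0 K
    have hA' : a₁ + a₂ ≤ a₁ + a₁ + a₂ := by linarith
    refine (norm_iteratedFDeriv_sum_le_card (S := S)
      (K := (2 / y K) ^ n * (y K ^ (2 * n) * w K) * (a₁ + a₂) ^ j * prodSeq ν' j)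
      (fun z => (hφ K z).mul (((hTfam _ _).contDiff 0).sub ((hTfam _ _).contDiff 0))) hS
      (fun z hz hzn => ?_) fun z hz => ?_).trans ?_
    · filter_upwards [hzS z hz hzn] with x' hx'
      rw [hx', zero_mul]
    · exact norm_iteratedFDeriv_mul_le' hN0 hN (hφ _ _)
        (((hTfam _ _).contDiff 0).sub ((hTfam _ _).contDiff 0)) (by positivity) (by positivity)
        ha₁0 ha₂0.le (fun i => hcut K _ a i)
        (fun i => hΔ K K _ _ a (hpt _ _ (hS hz)) ha (Or.inl rfl) (hxS z hz)
          (fun i => by rw [sub_self, abs_zero]; positivity) i) j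
    · have e1 : (2 / y K) ^ n * (y K ^ (2 * n) * w K) = 2 ^ n * y K ^ n * w K := by
        rw [div_pow, two_mul, pow_add]
        field_simp
      have e2 : (3 : ℝ) ^ n * (2 ^ n * 1) ≤ 36 ^ n := by
        rw [mul_one, ← mul_pow]
        gcongr
        norm_num
      have h4 : y K ^ n ≤ 1 := pow_le_one₀ hyk.le hy1
      rw [e1]
      calc _ ≤ (3 ^ n : ℝ) * (2 ^ n * 1 * w K * (a₁ + a₁ + a₂) ^ j * prodSeq ν' j) := by
            gcongr
            exact hcard _ hcS
        _ = (3 : ℝ) ^ n * (2 ^ n * 1) * w K * (a₁ + a₁ + a₂) ^ j * prodSeq ν' j := by ring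
        _ ≤ 36 ^ n * w K * (a₁ + a₁ + a₂) ^ j * prodSeq ν' j := by gcongr
        _ = _ := by rw [hwk K]; ring
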